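/- arXiv:1402.6261 — 2 statements merged into one kernel-verified Lean document; each statement's English description precedes it below -/
import Mathlib

section
/- Let X be a real k×n matrix of rank k and let 1 ≤ i ≤ n−1 satisfy i < f_X(i) < f_X(i+1) < i+n+1. Let I_{i+1} be the ≤_{i+1}-lexicographically minimal k-subset of [n] with Δ_{I_{i+1}}(X) ≠ 0; then i+1 ∈ I_{i+1} and i ∉ I_{i+1}. (a) If Δ_{(I_{i+1}∖{i+1})∪{i}}(X) ≠ 0, set a = Δ_{I_{i+1}}(X)/Δ_{(I_{i+1}∖{i+1})∪{i}}(X) and let X′ be obtained from X by subtracting a times column i from column i+1 (i.e., X′ = X·x_i(−a)); then f_{X′}(i) = f_X(i+1), f_{X′}(i+1) = f_X(i), and f_{X′}(r) = f_X(r) for all r ∈ [n]∖{i,i+1}. (b) If moreover X is totally nonnegative, then Δ_{(I_{i+1}∖{i+1})∪{i}}(X) ≠ 0 holds automatically, and X′ is again totally nonnegative. -/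
open Finset

noncomputable section
open scoped Classical

/-- The cyclic (clockwise) half-open interval `(a, b]` in `Fin m`. -/
def cIoc {m : ℕ} (a b : Fin m) : Finset (Fin m) :=
  univ.filter fun k => if a < b then a < k ∧ k ≤ b else a < k ∨ k ≤ b

/-- The open cyclic (clockwise) arc from `a` to `b` in `Fin m`, excluding both endpoints. -/
def cIoo {m : ℕ} (a b : Fin m) : Finset (Fin m) :=
  univ.filter fun k => if a < b then a < k ∧ k < b else (a < k ∨ k < b) ∧ k ≠ a ∧ k ≠ b

/-- Set partitions of `[n] = Fin n`. -/
abbrev NCP (n : ℕ) := Finpartition (univ : Finset (Fin n))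

/-- `a` and `b` lie in the same block of `σ`. -/
def sameBlock {n : ℕ} (σ : NCP n) (a b : Fin n) : Prop :=
  ∃ B ∈ σ.parts, a ∈ B ∧ b ∈ B

/-- `σ` is a noncrossing partition: there are no `a < b < c < d` with `a, c` in one
block and `b, d` in a different block. -/
def IsNoncrossing {n : ℕ} (σ : NCP n) : Prop :=
  ∀ a b c d : Fin n, a < b → b < c → c < d →
    sameBlock σ a c → sameBlock σ b d → sameBlock σ a b

/-- The relation defining the dual (Kreweras complement) partition: `ĩ ~ j̃` iff no block
of `σ` meets both cyclic intervals `{(i+1), …, j}` and `{(j+1), …, i}`. -/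
def dualRel {n : ℕ} (σ : NCP n) (i j : Fin n) : Prop :=
  i = j ∨ ¬ ∃ B ∈ σ.parts, (B ∩ cIoc i j).Nonempty ∧ (B ∩ cIoc j i).Nonempty

/-- The point `ī` of `[2n]` (0-based: `ī = 2i`). -/
def bar {n : ℕ} (i : Fin n) : Fin (2*n) := ⟨2*(i:ℕ), by have := i.isLt; omega⟩

/-- The point `ĩ` of `[2n]` (0-based: `ĩ = 2i+1`). -/
def til {n : ℕ} (i : Fin n) : Fin (2*n) := ⟨2*(i:ℕ)+1, by have := i.isLt; omega⟩

/-- A matching (fixed-point-free involution) of `Fin m`. -/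
def IsMatching {m : ℕ} (τ : Fin m → Fin m) : Prop :=
  Function.Involutive τ ∧ ∀ i, τ i ≠ i

/-- A noncrossing matching: there are no `a < b < c < d` with `τ a = c` and `τ b = d`. -/
def IsNCMatching {m : ℕ} (τ : Fin m → Fin m) : Prop :=
  ¬ ∃ a b c d : Fin m, a < b ∧ b < c ∧ c < d ∧ τ a = c ∧ τ b = d

/-- `j` is the cyclic predecessor of `i` in the block of `σ` containing `i`
(`j = i` when `i` is a singleton). -/
def cyclicPred {n : ℕ} (σ : NCP n) (j i : Fin n) : Prop :=
  ∃ B ∈ σ.parts, i ∈ B ∧ j ∈ B ∧ ∀ x ∈ B, x ∉ cIoo j i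

/-- `m` is the medial pairing of `σ`: it pairs `ī` (0-based `2i`) with `j̃` (0-based `2j+1`),
where `j` is the cyclic predecessor of `i` in its block. -/
def IsMedialOf {n : ℕ} (σ : NCP n) (m : Fin (2*n) → Fin (2*n)) : Prop :=
  ∀ i j : Fin n, m (bar i) = til j ↔ cyclicPred σ j i

/-- The crossing number of a matching: the number of pairs `{a,b}` with
`a < b < τ a < τ b`. -/
def crossNum {m : ℕ} (τ : Fin m → Fin m) : ℕ :=
  ((univ : Finset (Fin m × Fin m)).filter fun p =>
    p.1 < p.2 ∧ p.2 < τ p.1 ∧ τ p.1 < τ p.2).card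

/-- `a`, `b`, `c`, `d` are distinct and in cyclic order on `Fin m`. -/
def CyclicOrder4 {m : ℕ} (a b c d : Fin m) : Prop :=
  (a < b ∧ b < c ∧ c < d) ∨ (b < c ∧ c < d ∧ d < a) ∨
  (c < d ∧ d < a ∧ a < b) ∨ (d < a ∧ a < b ∧ b < c)

/-- `τ` covers `τ'` in the uncrossing order. -/
def UncrossCover {m : ℕ} (τ' τ : Fin m → Fin m) : Prop :=
  IsMatching τ' ∧ IsMatching τ ∧
  ∃ a b c d : Fin m, CyclicOrder4 a b c d ∧ τ a = c ∧ τ b = d ∧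
    (∀ x, x ≠ a → x ≠ b → x ≠ c → x ≠ d → τ' x = τ x) ∧
    ((τ' a = d ∧ τ' b = c ∧ ∀ x ∈ cIoo a b, τ x ∉ cIoo c d) ∨
     (τ' a = b ∧ τ' c = d ∧ ∀ x ∈ cIoo b c, τ x ∉ cIoo d a))

/-- The uncrossing partial order on matchings: reflexive-transitive closure of covers. -/
def uncrossLE {m : ℕ} (τ' τ : Fin m → Fin m) : Prop :=
  Relation.ReflTransGen UncrossCover τ' τ

/-- An affine permutation of period `m`. -/
def IsAffinePerm (m : ℕ) (f : ℤ → ℤ) : Prop :=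
  Function.Bijective f ∧ ∀ i : ℤ, f (i + m) = f i + m

/-- The length of an affine permutation of period `m`:
`#{(i,j) : 1 ≤ i ≤ m, i < j, f i > f j}`. -/
def affLen (m : ℕ) (f : ℤ → ℤ) : ℕ :=
  Set.ncard {p : ℤ × ℤ | 1 ≤ p.1 ∧ p.1 ≤ (m:ℤ) ∧ p.1 < p.2 ∧ f p.2 < f p.1}

/-- The affine rank matrix `r_f(i,j) = #{a ≤ i : f a ≥ j}`. -/
def rankMat (f : ℤ → ℤ) (i j : ℤ) : ℕ :=
  Set.ncard {a : ℤ | a ≤ i ∧ j ≤ f a}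

/-- Affine Bruhat order via rank matrices. -/
def bruhatLE (f g : ℤ → ℤ) : Prop := ∀ i j : ℤ, rankMat f i j ≤ rankMat g i j

/-- The sum `Σ_{i=1}^m (f i − i)`. -/
def windowSum (m : ℕ) (f : ℤ → ℤ) : ℤ :=
  ∑ i ∈ Finset.range m, (f ((i:ℤ)+1) - ((i:ℤ)+1))

/-- The affine permutation `g_τ` associated to a matching `τ` of `[2n]`:
on `[2n]`, `g_τ i = τ i` if `τ i > i` and `g_τ i = τ i + 2n` if `τ i < i`,
extended periodically. -/
def gTau (n : ℕ) (τ : Fin (2*n) → Fin (2*n)) (i : ℤ) : ℤ :=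
  if h : (i % ((2*n : ℕ) : ℤ)).toNat < 2*n then
    let r : Fin (2*n) := ⟨(i % ((2*n : ℕ) : ℤ)).toNat, h⟩
    (i - i % ((2*n : ℕ) : ℤ)) +
      (if r < τ r then ((τ r : ℕ) : ℤ) else ((τ r : ℕ) : ℤ) + 2*n)
  else i

/-- `f_τ = g_τ − 1`. -/
def fTau (n : ℕ) (τ : Fin (2*n) → Fin (2*n)) (i : ℤ) : ℤ := gTau n τ i - 1

/-- An electrical affine permutation for `n`. -/
def IsElectrical (n : ℕ) (f : ℤ → ℤ) : Prop :=
  IsAffinePerm (2*n) f ∧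
  (∀ i : ℤ, i ≤ f i ∧ f i ≤ i + 2*n - 2) ∧
  windowSum (2*n) f = ((n:ℤ) - 1) * (2*n) ∧
  ∀ i : ℤ, (f (f i + 1) - (i - 1)) % ((2*n : ℕ) : ℤ) = 0

/-- The Grassmann necklace subset `I_a(f) ⊆ [m]`: representatives in `[m]` (0-based) of
`{f b mod m : b < a and f b ≥ a}`. -/
def necklaceI (m : ℕ) (f : ℤ → ℤ) (a : ℤ) : Finset (Fin m) :=
  univ.filter fun x => ∃ b : ℤ, b < a ∧ a ≤ f b ∧ f b % (m:ℤ) = ((x:ℕ):ℤ)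

/-- The dual necklace subset `J_a(f) ⊆ [m]`: representatives in `[m]` (0-based) of
`{b mod m : b < a and f b ≥ a}`. -/
def necklaceJ (m : ℕ) (f : ℤ → ℤ) (a : ℤ) : Finset (Fin m) :=
  univ.filter fun x => ∃ b : ℤ, b < a ∧ a ≤ f b ∧ b % (m:ℤ) = ((x:ℕ):ℤ)

/-- Dominance order on `k`-element subsets of `Fin m`:
the `r`-th smallest element of `I` is at most the `r`-th smallest element of `J`. -/
def domLE {m : ℕ} (k : ℕ) (I J : Finset (Fin m)) : Prop :=
  ∃ (hI : I.card = k) (hJ : J.card = k),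
    ∀ r : Fin k, I.orderEmbOfFin hI r ≤ J.orderEmbOfFin hJ r

/-- `a`-shifted dominance order: rotate so that `a` becomes least, then compare. -/
def sdomLE {m : ℕ} (k : ℕ) (a : Fin m) (I J : Finset (Fin m)) : Prop :=
  domLE k (I.image (· - a)) (J.image (· - a))

/-- `a`-shifted lexicographic order on subsets of `Fin m`. -/
def lexLE {m : ℕ} (a : Fin m) (I J : Finset (Fin m)) : Prop :=
  I = J ∨ List.Lex (· < ·) ((I.image (· - a)).sort (· ≤ ·)) ((J.image (· - a)).sort (· ≤ ·))

/-- A Catalan subset of `[2n]` (0-based): an `(n−1)`-subset such that the length-`2n`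
word with `U` at positions `{0} ∪ {x+1 : x ∈ I}` and `D` elsewhere is a Dyck path. -/
def IsCatalan {n : ℕ} (I : Finset (Fin (2*n))) : Prop :=
  I.card = n - 1 ∧
  ∀ p : ℕ, p ≤ 2*n →
    p ≤ 2 * ((insert 0 (I.image fun x => (x:ℕ)+1)).filter (· < p)).card

/-- Catalan subset with respect to the shifted order `≤_a`. -/
def IsCatalanAt {n : ℕ} (a : Fin (2*n)) (I : Finset (Fin (2*n))) : Prop :=
  IsCatalan (I.image (· - a))

/-- The set of maxima of `S` with respect to the `a`-shifted order. -/
def maxAt {m : ℕ} (a : Fin m) (S : Finset (Fin m)) : Finset (Fin m) :=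
  S.filter fun x => ∀ y ∈ S, y - a ≤ x - a

/-- `I_a(σ)` for a noncrossing partition `σ`: the complement in `[2n]` of the set of
`≤_a`-maxima of the blocks of `σ` (embedded by `bar`) and of the blocks of the dual
partition `σ̃` (embedded by `til`). -/
def IaP {n : ℕ} (σ : NCP n) (a : Fin (2*n)) : Finset (Fin (2*n)) :=
  univ \ ((σ.parts.biUnion fun B => maxAt a (B.image bar)) ∪
          ((univ : Finset (Fin n)).biUnion fun i =>
            maxAt a ((univ.filter (dualRel σ i)).image til)))

/-- `I` is concordant with `σ`: `I` has `n−1` elements and every block of `σ` and of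
its dual `σ̃` contains exactly one element of `[2n] ∖ I`. -/
def Concordant {n : ℕ} (σ : NCP n) (I : Finset (Fin (2*n))) : Prop :=
  I.card = n - 1 ∧
  (∀ B ∈ σ.parts, ((B.image bar) ∩ (univ \ I)).card = 1) ∧
  (∀ i : Fin n, (((univ.filter (dualRel σ i)).image til) ∩ (univ \ I)).card = 1)

/-- `E(I)`: the set of noncrossing partitions concordant with `I`. -/
def ESet {n : ℕ} (I : Finset (Fin (2*n))) : Set (NCP n) :=
  {σ | IsNoncrossing σ ∧ Concordant σ I}

/-- The maximal minor `Δ_I(X)` on the columns indexed by `I`, in increasing order. -/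
def minorOn {k m : ℕ} (X : Matrix (Fin k) (Fin m) ℝ) (I : Finset (Fin m)) : ℝ :=
  if h : I.card = k then (X.submatrix id fun r => I.orderEmbOfFin h r).det else 0

/-- `X` is totally nonnegative: it has full rank `k` and all maximal minors are `≥ 0`. -/
def IsTNN {k m : ℕ} (X : Matrix (Fin k) (Fin m) ℝ) : Prop :=
  X.rank = k ∧ ∀ I : Finset (Fin m), I.card = k → 0 ≤ minorOn X I

/-- `t` times the matrix unit `E_{p,q}` (0-based indices). -/
def matE (m : ℕ) (p q : ℕ) (t : ℝ) : Matrix (Fin m) (Fin m) ℝ :=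
  Matrix.of fun r s => if (r:ℕ) = p ∧ (s:ℕ) = q then t else 0

/-- `x_i(t) = Id + t·E_{i,i+1}` (1-based index `i`). -/
def xB (m i : ℕ) (t : ℝ) : Matrix (Fin m) (Fin m) ℝ := 1 + matE m (i-1) i t

/-- `y_i(t) = Id + t·E_{i+1,i}` (1-based index `i`). -/
def yB (m i : ℕ) (t : ℝ) : Matrix (Fin m) (Fin m) ℝ := 1 + matE m i (i-1) t

/-- `u_i(t) = x_i(t)·y_{i−1}(t)` (1-based index `i`). -/
def uB (m i : ℕ) (t : ℝ) : Matrix (Fin m) (Fin m) ℝ := xB m i t * yB m (i-1) t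

/-- The columns of `X`, extended `n`-periodically to all integer indices (0-based). -/
def colP {k n : ℕ} (X : Matrix (Fin k) (Fin n) ℝ) (i : ℤ) : Fin k → ℝ :=
  fun r => if h : (i % (n:ℤ)).toNat < n then X r ⟨(i % (n:ℤ)).toNat, h⟩ else 0

/-- `f_X(i) = min { j ≥ i : v_i ∈ span(v_{i+1}, …, v_j) }` (0-based columns). -/
def fX {k n : ℕ} (X : Matrix (Fin k) (Fin n) ℝ) (i : ℤ) : ℤ :=
  sInf {j : ℤ | i ≤ j ∧ colP X i ∈ Submodule.span ℝ (colP X '' Set.Ioc i j)}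

/-- Fintype instance for finite partitions of a finite set. -/
instance {α : Type*} [DecidableEq α] [Fintype α] (s : Finset α) : Fintype (Finpartition s) :=
  Fintype.ofInjective Finpartition.parts fun _ _ h => Finpartition.ext h

/-- The sorted list of (the values of) a subset of `Fin m`. -/
def sortedL {m : ℕ} (I : Finset (Fin m)) : List ℕ :=
  (I.sort (· ≤ ·)).map Fin.val

/-- The number of inversions of a list (= the number of adjacent transpositions
needed to sort it, when entries are distinct). -/
def invNum (l : List ℕ) : ℕ :=
  ((Finset.range l.length ×ˢ Finset.range l.length).filter fun pq =>
    pq.1 < pq.2 ∧ l.getD pq.2 0 < l.getD pq.1 0).card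

/-- The subset of `Fin m` whose values lie in the list `l`. -/
def toFinF {m : ℕ} (l : List ℕ) : Finset (Fin m) :=
  univ.filter fun x => (x:ℕ) ∈ l

/-- The double sum `Σ_{σ ∈ E(l), κ ∈ E(l')} L σ · L κ`, where `E` of a list with a
repeated entry (or an out-of-range entry) is empty. -/
def pairSum {n : ℕ} (L : NCP n → ℝ) (l l' : List ℕ) : ℝ :=
  if (l.Nodup ∧ ∀ x ∈ l, x < 2*n) ∧ (l'.Nodup ∧ ∀ x ∈ l', x < 2*n) then
    ∑ᶠ σ ∈ ESet (n := n) (toFinF l), ∑ᶠ κ ∈ ESet (n := n) (toFinF l'), L σ * L κ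
  else 0

/-- The list obtained from `LI` by replacing its entries at the positions in `S`
(in increasing order of position) by the first `#S` entries of `LJ`. -/
def swapI (LI LJ : List ℕ) (S : Finset ℕ) : List ℕ :=
  (List.range LI.length).map fun p =>
    if p ∈ S then LJ.getD ((S.filter (· < p)).card) 0 else LI.getD p 0

/-- The list obtained from `LJ` by replacing its first `#S` entries by the entries of
`LI` at the positions in `S`, in increasing order. -/
def swapJ (LI LJ : List ℕ) (S : Finset ℕ) : List ℕ :=
  (List.range LJ.length).map fun p =>
    if p < S.card then LI.getD ((S.sort (· ≤ ·)).getD p 0) 0 else LJ.getD p 0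

/-!
Write `b = a + 1`, `S = I ∖ {b}`, and `v = v_b - λ v_a` with `λ = Δ_I / Δ_{aS}`. Replacing `v_b` by
`v` makes the minor on `I` vanish, so `v ∈ span S`; also `v` lies in the span of the columns
`b, …, f(a)`. Since `I` is the greedy basis for `≤_b`, intersecting the two spans inside the basis
`I` puts `v` in the span of the columns strictly after `b` and up to `f(a)`, and from there the
values of `f` at `a` and `b` swap.

For positivity one needs `Δ_{bT} / Δ_{aT} ≥ Δ_{bS} / Δ_{aS}` for all `T` with `Δ_{aT} ≠ 0`. An
element `t` of `T ∖ S` can be exchanged for an element `s` of `S ∖ T` with `s <_b t`, and the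
three-term Plücker relation says that this does not increase the ratio.
-/

section AlternatingMap

variable {R M N ι : Type*} [CommRing R] [AddCommGroup M] [Module R M] [AddCommGroup N] [Module R N]
  [LinearOrder ι] {m : ℕ}

lemma card_filter_lt_orderEmbOfFin (s : Finset ι) {k : ℕ} (h : s.card = k) (p : Fin k) :
    #{x ∈ s | x < s.orderEmbOfFin h p} = p := by
  have hmap : {x ∈ s | x < s.orderEmbOfFin h p} =
      (Finset.Iio p).map (s.orderEmbOfFin h).toEmbedding := by
    ext x
    simp only [Finset.mem_filter, Finset.mem_map, Finset.mem_Iio, RelEmbedding.coe_toEmbedding]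
    constructor
    · rintro ⟨hx, hlt⟩
      obtain ⟨r, rfl⟩ : x ∈ Set.range (s.orderEmbOfFin h) := by simpa using hx
      exact ⟨r, (s.orderEmbOfFin h).lt_iff_lt.1 hlt, rfl⟩
    · rintro ⟨r, hr, rfl⟩
      exact ⟨s.orderEmbOfFin_mem h r, (s.orderEmbOfFin h).lt_iff_lt.2 hr⟩
  rw [hmap, Finset.card_map, Fin.card_Iio]

lemma orderEmbOfFin_insert_succAbove {T : Finset ι} (hT : #T = m) {a : ι}
    (h : #(insert a T) = m + 1) {p : Fin (m + 1)} (hp : (insert a T).orderEmbOfFin h p = a)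
    (r : Fin m) : (insert a T).orderEmbOfFin h (p.succAbove r) = T.orderEmbOfFin hT r := by
  set e := (insert a T).orderEmbOfFin h
  refine congrFun (Finset.orderEmbOfFin_unique hT (f := e ∘ p.succAbove) (fun r => ?_)
    (e.strictMono.comp (Fin.strictMono_succAbove p))) r
  refine (Finset.mem_insert.1 (Finset.orderEmbOfFin_mem _ h _)).resolve_left fun hr => ?_
  exact Fin.succAbove_ne p r (e.injective (hr.trans hp.symm))

lemma alternatingMap_orderEmbOfFin_insert (F : M [⋀^Fin (m + 1)]→ₗ[R] N) (V : ι → M)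
    {T : Finset ι} (hT : #T = m) {a : ι} (h : #(insert a T) = m + 1) :
    F (fun r => V ((insert a T).orderEmbOfFin h r)) =
      (-1) ^ #{x ∈ T | x < a} • F (Matrix.vecCons (V a) fun r => V (T.orderEmbOfFin hT r)) := by
  obtain ⟨p, hp⟩ : a ∈ Set.range ((insert a T).orderEmbOfFin h) := by simp
  have hsplit : (fun r => V ((insert a T).orderEmbOfFin h r)) =
      p.insertNth (V a) fun r => V (T.orderEmbOfFin hT r) := by
    rw [← Fin.insertNth_self_removeNth p fun r => V ((insert a T).orderEmbOfFin h r), hp]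
    congr 1
    ext1 r
    exact congrArg V (orderEmbOfFin_insert_succAbove hT h hp r)
  have hcard : #{x ∈ T | x < a} = (p : ℕ) := by
    rw [← card_filter_lt_orderEmbOfFin _ h p, hp, Finset.filter_insert, if_neg (lt_irrefl a)]
  rw [hsplit, AlternatingMap.map_insertNth, hcard]

lemma alternatingMap_vecCons_vecCons_swap (F : M [⋀^Fin (m + 2)]→ₗ[R] N) (u v : M)
    (W : Fin m → M) :
    F (Matrix.vecCons v (Matrix.vecCons u W)) = -F (Matrix.vecCons u (Matrix.vecCons v W)) := by
  rw [← AlternatingMap.map_swap _ _ (i := 0) (j := 1) (by simp)]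
  congr 1
  ext1 r
  refine Fin.cases (by simp) (Fin.cases (by simp) fun r => ?_) r
  simp [Equiv.swap_apply_of_ne_of_ne, Fin.ext_iff]

end AlternatingMap

lemma sum_det_updateRow_smul {R ι : Type*} [CommRing R] [Fintype ι] [DecidableEq ι]
    (A : Matrix ι ι R) (c : ι → R) : ∑ j, (A.updateRow j c).det • A j = A.det • c := by
  rw [← Matrix.det_transpose A, ← Matrix.mulVec_cramer]
  ext r
  simp [Matrix.mulVec, dotProduct, mul_comm, Matrix.cramer_transpose_apply]

lemma detRowAlternating_three_term {R : Type*} [CommRing R] {m : ℕ}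
    (W : Fin m → Fin (m + 2) → R) (a b c d : Fin (m + 2) → R) :
    let ω (u v : Fin (m + 2) → R) : R :=
      Matrix.detRowAlternating (Matrix.vecCons u (Matrix.vecCons v W))
    ω a c * ω b d = ω a b * ω c d + ω a d * ω b c := by
  intro ω
  set A : Matrix (Fin (m + 2)) (Fin (m + 2)) R := Matrix.of (Matrix.vecCons a (Matrix.vecCons b W))
  let L : (Fin (m + 2) → R) →ₗ[R] R :=
    { toFun := fun u => ω u d
      map_add' := fun u v => AlternatingMap.map_vecCons_add _ _ _ _
      map_smul' := fun t u => AlternatingMap.map_vecCons_smul _ _ _ _ }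
  have hW (j : Fin m) : L (A j.succ.succ) = 0 :=
    Matrix.detRowAlternating.map_eq_zero_of_eq (Matrix.vecCons (W j) (Matrix.vecCons d W))
      (i := 0) (j := j.succ.succ) rfl (by simp [Fin.ext_iff])
  have hupdate₀ : (A.updateRow 0 c).det = ω c b :=
    congrArg Matrix.detRowAlternating (Fin.update_cons_zero (α := fun _ => Fin (m + 2) → R) _ _ _)
  have hupdate₁ : (A.updateRow (Fin.succ 0) c).det = ω a c := by
    refine congrArg Matrix.detRowAlternating ?_
    refine (Fin.cons_update (α := fun _ => Fin (m + 2) → R) _ _ _ _).symm.trans ?_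
    exact congrArg (Matrix.vecCons a)
      (Fin.update_cons_zero (α := fun _ => Fin (m + 2) → R) _ _ _)
  -- Apply `ω(·, d)` to Cramer's rule for the coordinates of `c` in the rows `a`, `b`, `W`.
  have hcramer : ω c b * ω a d + ω a c * ω b d = ω a b * ω c d := by
    have := congrArg L (sum_det_updateRow_smul A c)
    rw [map_sum, Fin.sum_univ_succ, Fin.sum_univ_succ, hupdate₀, hupdate₁] at this
    simp only [map_smul, smul_eq_mul, hW, mul_zero, Finset.sum_const_zero, add_zero] at this
    exact this
  have hswap : ω c b = -ω b c := alternatingMap_vecCons_vecCons_swap _ _ _ _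
  linear_combination hcramer - ω a d * hswap

section UpdateCol

variable {m ι R : Type*} [DecidableEq ι] {a b : ι} {D : Set ι}

lemma col_updateCol_self (X : Matrix m ι R) (b : ι) (v : m → R) : (X.updateCol b v).col b = v := by
  ext r
  simp

lemma col_updateCol_of_ne {X : Matrix m ι R} {x : ι} (h : x ≠ b) (v : m → R) :
    (X.updateCol b v).col x = X.col x := by
  ext r
  exact Matrix.updateCol_ne h

lemma image_col_updateCol {X : Matrix m ι R} (hb : b ∉ D) (v : m → R) :
    (X.updateCol b v).col '' D = X.col '' D :=
  Set.image_congr fun x hx => col_updateCol_of_ne (fun h : x = b => hb (h ▸ hx)) v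

lemma mul_transvection_neg [Fintype ι] [CommRing R] (X : Matrix m ι R) (a b : ι) (t : R) :
    X * Matrix.transvection a b (-t) = X.updateCol b (X.col b - t • X.col a) := by
  ext r s
  rcases eq_or_ne s b with rfl | hs
  · simp [sub_eq_add_neg]
  · simp [hs]

lemma span_image_col_updateCol_sub_smul [Ring R] {X : Matrix m ι R} (hab : a ≠ b) (t : R)
    (hD : b ∈ D → a ∈ D) :
    Submodule.span R ((X.updateCol b (X.col b - t • X.col a)).col '' D) =
      Submodule.span R (X.col '' D) := by
  by_cases hb : b ∈ D
  · obtain ⟨T, hT, rfl⟩ : ∃ T, b ∉ T ∧ D = insert b T :=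
      ⟨D \ {b}, by simp, by simp [Set.insert_eq_of_mem hb]⟩
    have ha : t • X.col a ∈ Submodule.span R (X.col '' T) := Submodule.smul_mem _ t
      (Submodule.subset_span (Set.mem_image_of_mem _ ((hD hb).resolve_left hab)))
    have ha' (v : m → R) : t • X.col a ∈ Submodule.span R (insert v (X.col '' T)) :=
      Submodule.span_mono (Set.subset_insert _ _) ha
    rw [Set.image_insert_eq, Set.image_insert_eq, image_col_updateCol hT, col_updateCol_self]
    refine le_antisymm (Submodule.span_le.2 ?_) (Submodule.span_le.2 ?_) <;>
      refine Set.insert_subset ?_ ((Set.subset_insert _ _).trans Submodule.subset_span)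
    · exact Submodule.sub_mem _ (Submodule.subset_span (Set.mem_insert _ _)) (ha' _)
    · exact (Submodule.sub_mem_iff_left _ (ha' _)).1 (Submodule.subset_span (Set.mem_insert _ _))
  · rw [image_col_updateCol hb]

end UpdateCol

section Minors

variable {k n : ℕ} {X : Matrix (Fin k) (Fin n) ℝ} {I T R : Finset (Fin n)}

lemma minorOn_of_card_ne (h : #I ≠ k) : minorOn X I = 0 := dif_neg h

lemma card_of_minorOn_ne_zero (h : minorOn X I ≠ 0) : #I = k :=
  of_not_not fun hI => h (minorOn_of_card_ne hI)

lemma minorOn_eq_detRowAlternating (h : #I = k) :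
    minorOn X I = Matrix.detRowAlternating fun r => X.col (I.orderEmbOfFin h r) := by
  rw [minorOn, dif_pos h, ← Matrix.det_transpose]
  rfl

lemma minorOn_insert {m : ℕ} {X : Matrix (Fin (m + 1)) (Fin n) ℝ} (hT : #T = m) {a : Fin n}
    (ha : a ∉ T) :
    minorOn X (insert a T) = (-1) ^ #{x ∈ T | x < a} * Matrix.detRowAlternating
      (Matrix.vecCons (X.col a) fun r => X.col (T.orderEmbOfFin hT r)) := by
  have h : #(insert a T) = m + 1 := by rw [Finset.card_insert_of_notMem ha, hT]
  rw [minorOn_eq_detRowAlternating h, alternatingMap_orderEmbOfFin_insert _ _ hT h]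
  simp

lemma minorOn_insert_insert {m : ℕ} {X : Matrix (Fin (m + 2)) (Fin n) ℝ} (hR : #R = m)
    {a b : Fin n} (ha : a ∉ R) (hb : b ∉ R) (hab : a < b) :
    minorOn X (insert a (insert b R)) = (-1) ^ #{x ∈ R | x < a} * (-1) ^ #{x ∈ R | x < b} *
      Matrix.detRowAlternating (Matrix.vecCons (X.col a) (Matrix.vecCons (X.col b)
        fun r => X.col (R.orderEmbOfFin hR r))) := by
  have h : #(insert b R) = m + 1 := by rw [Finset.card_insert_of_notMem hb, hR]
  have hexpand := alternatingMap_orderEmbOfFin_insert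
    ((Matrix.detRowAlternating (R := ℝ) (n := Fin (m + 2))).curryLeft (X.col a)) X.col hR h
  rw [AlternatingMap.curryLeft_apply_apply, AlternatingMap.curryLeft_apply_apply]
    at hexpand
  rw [minorOn_insert h (by simp [ha, hab.ne]), hexpand, Finset.filter_insert, if_neg hab.not_gt]
  simp [mul_assoc]

lemma minorOn_three_term (X : Matrix (Fin k) (Fin n) ℝ) {a b c d : Fin n} (ha : a ∉ R)
    (hb : b ∉ R) (hc : c ∉ R) (hd : d ∉ R) (hab : a < b) (hbc : b < c) (hcd : c < d) :
    minorOn X (insert a (insert c R)) * minorOn X (insert b (insert d R)) =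
      minorOn X (insert a (insert b R)) * minorOn X (insert c (insert d R)) +
      minorOn X (insert a (insert d R)) * minorOn X (insert b (insert c R)) := by
  by_cases hR : #R + 2 = k
  · subst hR
    rw [minorOn_insert_insert rfl ha hc (hab.trans hbc),
      minorOn_insert_insert rfl hb hd (hbc.trans hcd), minorOn_insert_insert rfl ha hb hab,
      minorOn_insert_insert rfl hc hd hcd,
      minorOn_insert_insert rfl ha hd (hab.trans (hbc.trans hcd)),
      minorOn_insert_insert rfl hb hc hbc]
    linear_combination ((-1 : ℝ) ^ #{x ∈ R | x < a} * (-1) ^ #{x ∈ R | x < b} *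
      (-1) ^ #{x ∈ R | x < c} * (-1) ^ #{x ∈ R | x < d}) *
      detRowAlternating_three_term (fun r => X.col (R.orderEmbOfFin rfl r))
        (X.col a) (X.col b) (X.col c) (X.col d)
  · have hzero {x y : Fin n} (hx : x ∉ R) (hy : y ∉ R) (hxy : x < y) :
        minorOn X (insert x (insert y R)) = 0 := by
      apply minorOn_of_card_ne
      rwa [Finset.card_insert_of_notMem (by simp [hxy.ne, hx]), Finset.card_insert_of_notMem hy]
    rw [hzero ha hc (hab.trans hbc), hzero ha hb hab, hzero hb hc hbc]
    ring

lemma minorOn_ne_zero_iff (h : #I = k) :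
    minorOn X I ≠ 0 ↔ LinearIndepOn ℝ X.col (I : Set (Fin n)) := by
  have hunit := Matrix.linearIndependent_rows_iff_isUnit
    (A := Matrix.of fun r => X.col (I.orderEmbOfFin h r))
  rw [Matrix.isUnit_iff_isUnit_det, isUnit_iff_ne_zero] at hunit
  rw [minorOn_eq_detRowAlternating h, LinearIndepOn,
    ← linearIndependent_equiv (I.orderIsoOfFin h).toEquiv]
  exact hunit.symm

lemma minorOn_insert_ne_zero (hT : LinearIndepOn ℝ X.col (T : Set (Fin n))) (hk : #T + 1 = k)
    {x : Fin n} (hx : X.col x ∉ Submodule.span ℝ (X.col '' T)) : minorOn X (insert x T) ≠ 0 := by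
  have hxT : x ∉ T := fun h => hx (Submodule.subset_span (Set.mem_image_of_mem _ h))
  rw [minorOn_ne_zero_iff (by rwa [Finset.card_insert_of_notMem hxT]), Finset.coe_insert]
  exact hT.insert hx

lemma linearIndepOn_of_minorOn_ne_zero (hI : minorOn X I ≠ 0) :
    LinearIndepOn ℝ X.col (I : Set (Fin n)) :=
  (minorOn_ne_zero_iff (card_of_minorOn_ne_zero hI)).1 hI

lemma span_col_image_eq_top (hI : minorOn X I ≠ 0) :
    Submodule.span ℝ (X.col '' (I : Set (Fin n))) = ⊤ := by
  have hspan := LinearIndependent.span_eq_top_of_card_eq_finrank'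
    (linearIndepOn_of_minorOn_ne_zero hI) (by simp [card_of_minorOn_ne_zero hI])
  rwa [← Set.image_eq_range] at hspan

lemma rank_eq_of_minorOn_ne_zero (hI : minorOn X I ≠ 0) : X.rank = k := by
  have htop : Submodule.span ℝ (Set.range X.col) = ⊤ :=
    top_le_iff.1 (span_col_image_eq_top hI ▸ Submodule.span_mono (Set.image_subset_range _ _))
  rw [Matrix.rank_eq_finrank_span_cols, htop, finrank_top, Module.finrank_fin_fun]

lemma IsTNN.minorOn_nonneg (h : IsTNN X) (I : Finset (Fin n)) : 0 ≤ minorOn X I := by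
  by_cases hI : #I = k
  · exact h.2 I hI
  · exact (minorOn_of_card_ne hI).ge

lemma minorOn_updateCol_of_notMem {b : Fin n} (hb : b ∉ I) (v : Fin k → ℝ) :
    minorOn (X.updateCol b v) I = minorOn X I := by
  by_cases hI : #I = k
  · rw [minorOn_eq_detRowAlternating hI, minorOn_eq_detRowAlternating hI]
    congr 1
    ext1 r
    exact col_updateCol_of_ne (fun h : _ = b => hb (h ▸ Finset.orderEmbOfFin_mem I hI r)) v
  · rw [minorOn_of_card_ne hI, minorOn_of_card_ne hI]

lemma mem_span_of_minorOn_updateCol_eq_zero (hT : LinearIndepOn ℝ X.col (T : Set (Fin n)))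
    (hk : #T + 1 = k) {b : Fin n} (hb : b ∉ T) {v : Fin k → ℝ}
    (h : minorOn (X.updateCol b v) (insert b T) = 0) : v ∈ Submodule.span ℝ (X.col '' T) := by
  have heq : Set.EqOn (X.updateCol b v).col X.col T := fun x hx =>
    col_updateCol_of_ne (fun hxb : x = b => hb (hxb ▸ hx)) v
  by_contra hv
  refine minorOn_insert_ne_zero ((linearIndepOn_congr heq).2 hT) hk ?_ h
  rwa [heq.image_eq, col_updateCol_self]

lemma minorOn_updateCol_insert {m : ℕ} {X : Matrix (Fin (m + 1)) (Fin n) ℝ} (hT : #T = m)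
    {b : Fin n} (hb : b ∉ T) (v : Fin (m + 1) → ℝ) :
    minorOn (X.updateCol b v) (insert b T) = (-1) ^ #{x ∈ T | x < b} *
      Matrix.detRowAlternating (Matrix.vecCons v fun r => X.col (T.orderEmbOfFin hT r)) := by
  have hrest : (fun r => (X.updateCol b v).col (T.orderEmbOfFin hT r)) =
      fun r => X.col (T.orderEmbOfFin hT r) := by
    ext1 r
    exact col_updateCol_of_ne (fun h : _ = b => hb (h ▸ Finset.orderEmbOfFin_mem T hT r)) v
  rw [minorOn_insert hT hb, col_updateCol_self, hrest]

lemma minorOn_updateCol_sub_smul_insert {a b : Fin n} (hab : (b : ℕ) = a + 1) (t : ℝ)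
    (hb : b ∉ T) :
    minorOn (X.updateCol b (X.col b - t • X.col a)) (insert b T) =
      minorOn X (insert b T) - t * if a ∈ T then 0 else minorOn X (insert a T) := by
  by_cases hT : #T + 1 = k
  · subst hT
    rw [minorOn_updateCol_insert rfl hb, minorOn_insert rfl hb, sub_eq_add_neg, ← neg_smul,
      AlternatingMap.map_vecCons_add, AlternatingMap.map_vecCons_smul, smul_eq_mul]
    split_ifs with ha
    · obtain ⟨r, hr⟩ : a ∈ Set.range (T.orderEmbOfFin rfl) := by simpa using ha
      rw [Matrix.detRowAlternating.map_eq_zero_of_eq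
        (Matrix.vecCons (X.col a) fun r => X.col (T.orderEmbOfFin rfl r)) (i := 0) (j := r.succ)
        (by simp [hr]) (Fin.succ_ne_zero r).symm]
      ring
    · have hfilter : {x ∈ T | x < b} = {x ∈ T | x < a} := by
        refine Finset.filter_congr fun x hx => ?_
        have hxa : (x : ℕ) ≠ a := fun h => ha (Fin.ext h ▸ hx)
        rw [Fin.lt_def, Fin.lt_def]
        omega
      rw [minorOn_insert rfl ha, hfilter]
      ring
  · have hzero {x : Fin n} (hx : x ∉ T) (Y : Matrix (Fin k) (Fin n) ℝ) :
        minorOn Y (insert x T) = 0 :=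
      minorOn_of_card_ne (by rwa [Finset.card_insert_of_notMem hx])
    rw [hzero hb, hzero hb]
    split_ifs with ha
    · ring
    · rw [hzero ha]
      ring

end Minors

lemma xB_eq_transvection {n i : ℕ} {a b : Fin n} (ha : (a : ℕ) = i) (hb : (b : ℕ) = i + 1)
    (t : ℝ) : xB n (i + 1) t = Matrix.transvection a b t := by
  ext r s
  simp [xB, matE, Matrix.transvection, Matrix.single_apply, Fin.ext_iff, ha, hb, eq_comm]

section LinearIndepOn

variable {K ι E : Type*} [AddCommGroup E]

lemma exists_finset_forall_mem_span_image_iff [Ring K] [Module K E] {V : ι → E} {B : Set ι}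
    (hB : LinearIndepOn K V B) {z : E} (hz : z ∈ Submodule.span K (V '' B)) :
    ∃ C : Finset ι, ∀ A ⊆ B, z ∈ Submodule.span K (V '' A) ↔ ↑C ⊆ A := by
  obtain ⟨l, hl, rfl⟩ := (Finsupp.mem_span_image_iff_linearCombination K).1 hz
  refine ⟨l.support, fun A hA => ⟨fun h => ?_, fun h => ?_⟩⟩
  · obtain ⟨l', hl', heq⟩ := (Finsupp.mem_span_image_iff_linearCombination K).1 h
    have hl'l : l' = l := linearIndepOn_iffₛ.1 hB l' (Finsupp.supported_mono hA hl') l hl heq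
    exact hl'l ▸ (Finsupp.mem_supported K l').1 hl'
  · exact (Finsupp.mem_span_image_iff_linearCombination K).2
      ⟨l, (Finsupp.mem_supported K l).2 h, rfl⟩

lemma mem_span_image_inter [Ring K] [Module K E] {V : ι → E} {A₁ A₂ : Set ι}
    (h : LinearIndepOn K V (A₁ ∪ A₂)) {z : E} (h₁ : z ∈ Submodule.span K (V '' A₁))
    (h₂ : z ∈ Submodule.span K (V '' A₂)) : z ∈ Submodule.span K (V '' (A₁ ∩ A₂)) := by
  obtain ⟨C, hC⟩ := exists_finset_forall_mem_span_image_iff h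
    (Submodule.span_mono (Set.image_mono Set.subset_union_left) h₁)
  rw [hC _ (Set.inter_subset_left.trans Set.subset_union_left)]
  exact Set.subset_inter ((hC _ Set.subset_union_left).1 h₁) ((hC _ Set.subset_union_right).1 h₂)

lemma exists_linearIndepOn_insert_sdiff [DivisionRing K] [Module K E] {V : ι → E} {A B : Set ι}
    (hB : LinearIndepOn K V B) {x : ι} (hxB : V x ∈ Submodule.span K (V '' B))
    (hxA : V x ∉ Submodule.span K (V '' A)) :
    ∃ t ∈ B, t ∉ A ∧ LinearIndepOn K V (insert x (B \ {t})) := by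
  obtain ⟨C, hC⟩ := exists_finset_forall_mem_span_image_iff hB hxB
  obtain ⟨t, htC, htA⟩ : ∃ t ∈ C, t ∉ A := by
    by_contra! hCA
    exact hxA (Submodule.span_mono (Set.image_mono Set.inter_subset_right)
      ((hC (B ∩ A) Set.inter_subset_left).2 fun t ht => ⟨(hC B subset_rfl).1 hxB ht, hCA t ht⟩))
  refine ⟨t, (hC B subset_rfl).1 hxB htC, htA, ?_⟩
  refine (hB.mono Set.sdiff_subset).insert fun hx => ?_
  exact (((hC _ Set.sdiff_subset).1 hx) htC).2 rfl

end LinearIndepOn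

section Greedy

variable (K : Type*) {ι E α : Type*} [Ring K] [AddCommGroup E] [Module K E] [Preorder α]

/-- `I` is the basis picked by the greedy algorithm among the vectors `V x`, taken in increasing
order of `ψ x`: it is independent, and each `V x` lies in the span of the chosen vectors up to
position `ψ x`. -/
structure IsGreedyBasis (V : ι → E) (ψ : ι → α) (I : Set ι) : Prop where
  linearIndepOn : LinearIndepOn K V I
  mem_span : ∀ x, V x ∈ Submodule.span K (V '' {y ∈ I | ψ y ≤ ψ x})

variable {K}

lemma IsGreedyBasis.span_image_inter_preimage {V : ι → E} {ψ : ι → α} {I : Set ι}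
    (h : IsGreedyBasis K V ψ I) {D : Set α} (hD : IsLowerSet D) :
    Submodule.span K (V '' (I ∩ ψ ⁻¹' D)) = Submodule.span K (V '' (ψ ⁻¹' D)) := by
  refine le_antisymm (Submodule.span_mono (Set.image_mono Set.inter_subset_right)) ?_
  rw [Submodule.span_le, Set.image_subset_iff]
  have hsub (x : ι) (hx : ψ x ∈ D) : {y ∈ I | ψ y ≤ ψ x} ⊆ I ∩ ψ ⁻¹' D :=
    fun y hy => ⟨hy.1, hD hy.2 hx⟩
  exact fun x hx => Submodule.span_mono (Set.image_mono (hsub x hx)) (h.mem_span x)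

end Greedy

lemma not_lex_of_mem_of_notMem {α : Type*} [LinearOrder α] {l₁ l₂ : List α}
    (h₁ : l₁.Pairwise (· < ·)) (h₂ : l₂.Pairwise (· < ·)) {x s : α} (hx₂ : x ∈ l₂) (hx₁ : x ∉ l₁)
    (hs : s ∈ l₁) (hxs : x < s) (h : ∀ y < x, y ∈ l₁ ↔ y ∈ l₂) : ¬ List.Lex (· < ·) l₁ l₂ := by
  intro hlex
  induction hlex with
  | nil => simp at hs
  | @rel u l₁ v l₂ huv =>
    have hle : ∀ y ∈ v :: l₂, v ≤ y := by
      simpa using fun y hy => (List.rel_of_pairwise_cons h₂ hy).le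
    have hu : u ∈ v :: l₂ := (h u (huv.trans_le (hle x hx₂))).1 List.mem_cons_self
    exact (hle u hu).not_gt huv
  | @cons u l₁ l₂ _ ih =>
    rw [List.pairwise_cons] at h₁ h₂
    rw [List.mem_cons, not_or] at hx₁
    have hx : x ∈ l₂ := (List.mem_cons.1 hx₂).resolve_left hx₁.1
    refine ih h₁.2 h₂.2 hx hx₁.2 ?_ fun y hy => ?_
    · exact (List.mem_cons.1 hs).resolve_left fun hsu => (hxs.trans_eq hsu).not_gt (h₂.1 x hx)
    · rcases eq_or_ne y u with rfl | hyu
      · exact iff_of_false (fun hy₁ => (h₁.1 y hy₁).false) fun hy₂ => (h₂.1 y hy₂).false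
      · simpa [hyu] using h y hy

lemma not_lex_sort_insert_erase {α : Type*} [LinearOrder α] {A : Finset α} {x s : α} (hx : x ∉ A)
    (hs : s ∈ A) (hxs : x < s) : ¬ List.Lex (· < ·) (A.sort (· ≤ ·))
      ((insert x (A.erase s)).sort (· ≤ ·)) := by
  refine not_lex_of_mem_of_notMem (Finset.sortedLT_sort _).pairwise
    (Finset.sortedLT_sort _).pairwise (x := x) (s := s) (by simp) (by simpa using hx)
    (by simpa using hs) hxs fun y hy => ?_
  simp [hy.ne, (hy.trans hxs).ne]

section CyclicOrder

variable {k n : ℕ} {X : Matrix (Fin k) (Fin n) ℝ} {a b : Fin n}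

/-- The representative of `x` modulo `n` in the window `[b, b + n)`. Comparing `cycLift b x` is
comparing with respect to the order `≤_b`, and `cycLift b x` is the index at which the periodic
extension `colP` first reaches the column `x`, starting from `b`. -/
def cycLift (b x : Fin n) : ℤ := if b ≤ x then x else x + n

lemma le_cycLift (b x : Fin n) : (b : ℤ) ≤ cycLift b x := by
  unfold cycLift
  split_ifs with h
  · exact_mod_cast h
  · omega

lemma cycLift_lt (b x : Fin n) : cycLift b x < b + n := by
  unfold cycLift
  split_ifs with h
  · omega
  · rw [Fin.le_def] at h
    omega

lemma cycLift_self (b : Fin n) : cycLift b b = b := if_pos le_rfl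

lemma cycLift_of_succ (hab : (b : ℕ) = a + 1) : cycLift b a = a + n :=
  if_neg (by rw [Fin.le_def]; omega)

lemma cycLift_emod (b x : Fin n) : cycLift b x % n = x := by
  unfold cycLift
  split_ifs
  · exact Int.emod_eq_of_lt (by omega) (by omega)
  · rw [Int.add_emod_right]
    exact Int.emod_eq_of_lt (by omega) (by omega)

lemma cycLift_injective (b : Fin n) : Function.Injective (cycLift b) := fun x y h => by
  have := cycLift_emod b x
  rw [h, cycLift_emod] at this
  omega

lemma lt_cycLift {x : Fin n} (h : x ≠ b) : (b : ℤ) < cycLift b x :=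
  (le_cycLift b x).lt_of_ne' fun hx => h (cycLift_injective b (hx.trans (cycLift_self b).symm))

lemma exists_cycLift_eq {b : Fin n} {j : ℤ} (hbj : b ≤ j) (hj : j < b + n) :
    ∃ x, cycLift b x = j := by
  rcases lt_or_ge j n with hjn | hjn
  · refine ⟨⟨j.toNat, by omega⟩, ?_⟩
    rw [cycLift, if_pos (by rw [Fin.le_def]; simp only; omega)]
    simp only
    omega
  · refine ⟨⟨(j - n).toNat, by omega⟩, ?_⟩
    rw [cycLift, if_neg (by rw [Fin.le_def]; simp only; omega)]
    simp only
    omega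

lemma preimage_cycLift_Iic {j : ℤ} (hbj : b ≤ j) :
    cycLift b ⁻¹' Set.Iic j = insert b (cycLift b ⁻¹' Set.Ioc (b : ℤ) j) := by
  ext x
  rcases eq_or_ne x b with rfl | hx
  · simpa [cycLift_self] using hbj
  · simp [hx, lt_cycLift hx]

lemma coe_sub_eq_cycLift_sub (b x : Fin n) : ((x - b : Fin n) : ℤ) = cycLift b x - b := by
  unfold cycLift
  split_ifs with h
  · rw [Fin.sub_val_of_le h]
    rw [Fin.le_def] at h
    omega
  · rw [Fin.coe_sub_iff_lt.2 (not_le.1 h)]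
    omega

lemma sub_lt_sub_iff_cycLift_lt {x y : Fin n} : x - b < y - b ↔ cycLift b x < cycLift b y := by
  rw [Fin.lt_def, ← Int.ofNat_lt, coe_sub_eq_cycLift_sub, coe_sub_eq_cycLift_sub]
  omega

lemma minorOn_three_term_cyclic (X : Matrix (Fin k) (Fin n) ℝ) {R : Finset (Fin n)} {x y : Fin n}
    (hab : (b : ℕ) = a + 1) (ha : a ∉ R) (hb : b ∉ R) (hx : x ∉ R) (hy : y ∉ R) (hxb : x ≠ b)
    (hya : y ≠ a) (hxy : cycLift b x < cycLift b y) :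
    minorOn X (insert b (insert y R)) * minorOn X (insert a (insert x R)) =
      minorOn X (insert b (insert x R)) * minorOn X (insert a (insert y R)) +
      minorOn X (insert b (insert a R)) * minorOn X (insert x (insert y R)) := by
  have hba : a < b := by rw [Fin.lt_def]; omega
  have hcases : (b < x ∧ x < y) ∨ (x < y ∧ y < a) ∨ (y < a ∧ b < x) := by
    rw [Ne, Fin.ext_iff] at hxb hya
    simp only [cycLift, Fin.le_def] at hxy
    simp only [Fin.lt_def]
    split_ifs at hxy <;> omega
  rcases hcases with ⟨h₁, h₂⟩ | ⟨h₁, h₂⟩ | ⟨h₁, h₂⟩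
  · rw [Finset.insert_comm b a]
    linear_combination minorOn_three_term X ha hb hx hy hba h₁ h₂
  · rw [Finset.insert_comm b a, Finset.insert_comm b y, Finset.insert_comm b x,
      Finset.insert_comm a x, Finset.insert_comm a y]
    linear_combination minorOn_three_term X hx hy ha hb h₁ h₂ hba
  · rw [Finset.insert_comm b a, Finset.insert_comm b y, Finset.insert_comm x y,
      Finset.insert_comm a y]
    linear_combination minorOn_three_term X hy ha hb hx h₁ hba h₂

lemma not_lexLE_insert_erase {I : Finset (Fin n)} {x s : Fin n} (hx : x ∉ I) (hs : s ∈ I)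
    (hxs : cycLift b x < cycLift b s) : ¬ lexLE b I (insert x (I.erase s)) := by
  have : NeZero n := ⟨x.pos.ne'⟩
  have hinj : Function.Injective fun y => y - b := sub_left_injective
  rintro (h | h)
  · exact hx (h ▸ Finset.mem_insert_self _ _)
  · rw [Finset.image_insert, Finset.image_erase hinj] at h
    exact not_lex_sort_insert_erase (x := x - b) (s := s - b) (by simpa using hx)
      (Finset.mem_image_of_mem (· - b) hs) (sub_lt_sub_iff_cycLift_lt.2 hxs) h

lemma isGreedyBasis_of_lexLE {I : Finset (Fin n)} (hI : minorOn X I ≠ 0)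
    (hlex : ∀ J : Finset (Fin n), #J = k → minorOn X J ≠ 0 → lexLE b I J) :
    IsGreedyBasis ℝ X.col (cycLift b) I := by
  have hind := linearIndepOn_of_minorOn_ne_zero hI
  refine ⟨hind, fun x => by_contra fun hx => ?_⟩
  obtain ⟨s, hs, hxs, hexch⟩ := exists_linearIndepOn_insert_sdiff hind
    (span_col_image_eq_top hI ▸ Submodule.mem_top) hx
  have hlt : cycLift b x < cycLift b s := not_le.1 fun hle => hxs ⟨hs, hle⟩
  have hxI : x ∉ I := fun hxI => hx (Submodule.subset_span ⟨x, ⟨hxI, le_rfl⟩, rfl⟩)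
  have hcard : #(insert x (I.erase s)) = k := by
    rw [Finset.card_insert_of_notMem (by simp [hxI]), Finset.card_erase_add_one hs,
      card_of_minorOn_ne_zero hI]
  refine not_lexLE_insert_erase hxI hs hlt (hlex _ hcard ((minorOn_ne_zero_iff hcard).2 ?_))
  rwa [Finset.coe_insert, Finset.coe_erase]

lemma colP_of_emod (X : Matrix (Fin k) (Fin n) ℝ) {m : ℤ} {x : Fin n} (h : m % n = x) :
    colP X m = X.col x := by
  ext r
  simp [colP, h]

lemma colP_image (X : Matrix (Fin k) (Fin n) ℝ) (b : Fin n) {M : Set ℤ}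
    (hM : M ⊆ Set.Ico (b : ℤ) (b + n)) : colP X '' M = X.col '' (cycLift b ⁻¹' M) := by
  ext v
  constructor
  · rintro ⟨m, hm, rfl⟩
    obtain ⟨x, rfl⟩ := exists_cycLift_eq (hM hm).1 (hM hm).2
    exact ⟨x, hm, (colP_of_emod X (cycLift_emod b x)).symm⟩
  · rintro ⟨x, hx, rfl⟩
    exact ⟨_, hx, colP_of_emod X (cycLift_emod b x)⟩

end CyclicOrder

section fX

variable {k n : ℕ} {X : Matrix (Fin k) (Fin n) ℝ} {a b : Fin n} {j : ℤ}

lemma colP_mem_span_image_Ioc_add (hn : 0 < n) (i : ℤ) :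
    colP X i ∈ Submodule.span ℝ (colP X '' Set.Ioc i (i + n)) := by
  have hperiodic : colP X (i + n) = colP X i := by
    ext r
    simp [colP]
  exact Submodule.subset_span ⟨i + n, ⟨by omega, le_rfl⟩, hperiodic⟩

lemma fX_le_iff (hn : 0 < n) (i : ℤ) :
    fX X i ≤ j ↔ i ≤ j ∧ colP X i ∈ Submodule.span ℝ (colP X '' Set.Ioc i j) := by
  have hbdd : BddBelow {j : ℤ | i ≤ j ∧ colP X i ∈ Submodule.span ℝ (colP X '' Set.Ioc i j)} :=
    ⟨i, fun j hj => hj.1⟩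
  have hmin : fX X i ∈ {j : ℤ | i ≤ j ∧ colP X i ∈ Submodule.span ℝ (colP X '' Set.Ioc i j)} :=
    Int.csInf_mem ⟨i + n, by omega, colP_mem_span_image_Ioc_add hn i⟩ hbdd
  refine ⟨fun h => ⟨hmin.1.trans h, ?_⟩, fun h => csInf_le hbdd h⟩
  exact Submodule.span_mono (Set.image_mono (Set.Ioc_subset_Ioc_right h)) hmin.2

lemma le_fX (hn : 0 < n) (i : ℤ) : i ≤ fX X i := ((fX_le_iff hn i).1 le_rfl).1

lemma fX_le_add (hn : 0 < n) (i : ℤ) : fX X i ≤ i + n :=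
  (fX_le_iff hn i).2 ⟨by omega, colP_mem_span_image_Ioc_add hn i⟩

lemma fX_le_iff_col_mem_span (hbj : b ≤ j) (hj : j < b + n) :
    fX X b ≤ j ↔
      X.col b ∈ Submodule.span ℝ (X.col '' (cycLift b ⁻¹' Set.Ioc (b : ℤ) j)) := by
  rw [fX_le_iff b.pos, colP_of_emod X (Int.emod_eq_of_lt (by omega) (by omega)),
    colP_image X b (M := Set.Ioc (b : ℤ) j) fun m hm => ⟨hm.1.le, hm.2.trans_lt hj⟩]
  exact and_iff_right hbj

lemma fX_pred_le_iff_col_mem_span (hab : (b : ℕ) = a + 1) (haj : a ≤ j) (hj : j < b + n) :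
    fX X a ≤ j ↔ X.col a ∈ Submodule.span ℝ (X.col '' (cycLift b ⁻¹' Set.Iic j)) := by
  have hIoc : cycLift b ⁻¹' Set.Ioc (a : ℤ) j = cycLift b ⁻¹' Set.Iic j := by
    ext x
    have := le_cycLift b x
    simp only [Set.mem_preimage, Set.mem_Ioc, Set.mem_Iic]
    omega
  rw [fX_le_iff a.pos, colP_of_emod X (Int.emod_eq_of_lt (by omega) (by omega)),
    colP_image X b (M := Set.Ioc (a : ℤ) j)
      fun m hm => ⟨by have := hm.1; omega, hm.2.trans_lt hj⟩, hIoc]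
  exact and_iff_right haj

lemma fX_updateCol_sub_smul_of_ne (hab : (b : ℕ) = a + 1) (t : ℝ) {r : Fin n} (hra : r ≠ a)
    (hrb : r ≠ b) : fX (X.updateCol b (X.col b - t • X.col a)) r = fX X r := by
  have hne : a ≠ b := fun h => by simp [h] at hab
  have hlift : cycLift r b = cycLift r a + 1 := by
    rw [Ne, Fin.ext_iff] at hra hrb
    simp only [cycLift, Fin.le_def]
    split_ifs <;> omega
  refine eq_of_forall_ge_iff fun j => ?_
  rcases lt_or_ge j r with hjr | hrj
  · exact iff_of_false (fun h => hjr.not_ge ((le_fX r.pos _).trans h))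
      fun h => hjr.not_ge ((le_fX r.pos _).trans h)
  rcases lt_or_ge j (r + n) with hj | hj
  · have hD : b ∈ cycLift r ⁻¹' Set.Ioc (r : ℤ) j → a ∈ cycLift r ⁻¹' Set.Ioc (r : ℤ) j :=
      fun hb => ⟨lt_cycLift hra.symm, by have := hb.2; omega⟩
    rw [fX_le_iff_col_mem_span hrj hj, fX_le_iff_col_mem_span hrj hj,
      span_image_col_updateCol_sub_smul hne t hD, col_updateCol_of_ne hrb]
  · exact iff_of_true ((fX_le_add r.pos _).trans hj) ((fX_le_add r.pos _).trans hj)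

end fX

/-- The positions at which a bridge can be split off: `b = a + 1` and
`a < f_X(a) < f_X(b) < a + n + 1`. -/
structure IsBridge {k n : ℕ} (X : Matrix (Fin k) (Fin n) ℝ) (a b : Fin n) : Prop where
  succ : (b : ℕ) = a + 1
  lt_fX : (a : ℤ) < fX X a
  fX_lt_fX : fX X a < fX X b
  fX_lt : fX X b < b + n

namespace IsBridge

variable {k n : ℕ} {X : Matrix (Fin k) (Fin n) ℝ} {a b : Fin n} {t : ℝ}

lemma ne (h : IsBridge X a b) : a ≠ b := fun hab => by simpa [hab] using h.succ

lemma right_le_fX (h : IsBridge X a b) : (b : ℤ) ≤ fX X a := by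
  have := h.succ
  have := h.lt_fX
  omega

lemma col_right_mem_span (h : IsBridge X a b) :
    X.col b ∈ Submodule.span ℝ (X.col '' (cycLift b ⁻¹' Set.Ioc (b : ℤ) (fX X b))) :=
  (fX_le_iff_col_mem_span (h.right_le_fX.trans h.fX_lt_fX.le) h.fX_lt).1 le_rfl

lemma fX_updateCol_left (h : IsBridge X a b) (ht : t ≠ 0)
    (hmem : X.col b - t • X.col a ∈
      Submodule.span ℝ (X.col '' (cycLift b ⁻¹' Set.Ioc (b : ℤ) (fX X a)))) :
    fX (X.updateCol b (X.col b - t • X.col a)) a = fX X b := by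
  have hiff (j : ℤ) (haj : fX X a ≤ j) (hj : j < b + n) :
      fX (X.updateCol b (X.col b - t • X.col a)) a ≤ j ↔ fX X b ≤ j := by
    have hv : X.col b - t • X.col a ∈
        Submodule.span ℝ (X.col '' (cycLift b ⁻¹' Set.Ioc (b : ℤ) j)) :=
      Submodule.span_mono (Set.image_mono (Set.preimage_mono (Set.Ioc_subset_Ioc_right haj))) hmem
    rw [fX_pred_le_iff_col_mem_span h.succ (h.lt_fX.le.trans haj) hj,
      fX_le_iff_col_mem_span (h.right_le_fX.trans haj) hj,
      preimage_cycLift_Iic (h.right_le_fX.trans haj), Set.image_insert_eq,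
      image_col_updateCol (by simp [cycLift_self]), col_updateCol_self,
      col_updateCol_of_ne h.ne, Submodule.span_insert_eq_span hv,
      ← Submodule.smul_mem_iff _ ht, ← Submodule.add_mem_iff_right _ hv, sub_add_cancel]
  refine le_antisymm ((hiff _ h.fX_lt_fX.le h.fX_lt).2 le_rfl) (not_lt.1 fun hlt => ?_)
  have := h.fX_lt_fX
  have := h.fX_lt
  have := (hiff (fX X b - 1) (by omega) (by omega)).1 (by omega)
  omega

lemma fX_updateCol_right (h : IsBridge X a b) (ht : t ≠ 0)
    (hmem : X.col b - t • X.col a ∈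
      Submodule.span ℝ (X.col '' (cycLift b ⁻¹' Set.Ioc (b : ℤ) (fX X a)))) :
    fX (X.updateCol b (X.col b - t • X.col a)) b = fX X a := by
  have hlt := h.fX_lt_fX.trans h.fX_lt
  have hiff (j : ℤ) (hbj : b ≤ j) (hj : j < b + n) :
      fX (X.updateCol b (X.col b - t • X.col a)) b ≤ j ↔ X.col b - t • X.col a ∈
        Submodule.span ℝ (X.col '' (cycLift b ⁻¹' Set.Ioc (b : ℤ) j)) := by
    rw [fX_le_iff_col_mem_span hbj hj, image_col_updateCol (by simp [cycLift_self]),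
      col_updateCol_self]
  refine le_antisymm ((hiff _ h.right_le_fX hlt).2 hmem) (not_lt.1 fun hlt' => ?_)
  have hb := le_fX (X := X.updateCol b (X.col b - t • X.col a)) b.pos b
  have hv := (hiff (fX X a - 1) (by omega) (by omega)).1 (by omega)
  have ha : fX X a ≤ fX X a - 1 := by
    have := h.succ
    rw [fX_pred_le_iff_col_mem_span h.succ (by omega) (by omega),
      preimage_cycLift_Iic (by omega), Set.image_insert_eq, ← Submodule.smul_mem_iff _ ht,
      ← Submodule.sub_mem_iff_right _ (Submodule.subset_span (Set.mem_insert (X.col b) _))]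
    exact Submodule.span_mono (Set.subset_insert _ _) hv
  omega

end IsBridge

/-- A bridge position `(a, b)` of `X` together with a nonvanishing minor `I` picked greedily with
respect to `≤_b`. -/
structure IsBridgeBasis {k n : ℕ} (X : Matrix (Fin k) (Fin n) ℝ) (a b : Fin n)
    (I : Finset (Fin n)) : Prop extends IsBridge X a b where
  minorOn_ne_zero : minorOn X I ≠ 0
  isGreedyBasis : IsGreedyBasis ℝ X.col (cycLift b) I

namespace IsBridgeBasis

variable {k n : ℕ} {X : Matrix (Fin k) (Fin n) ℝ} {a b : Fin n} {I T : Finset (Fin n)}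

lemma fX_left_le_iff (h : IsBridgeBasis X a b I) {j : ℤ} (haj : a ≤ j) (hj : j < b + n) :
    fX X a ≤ j ↔ X.col a ∈ Submodule.span ℝ (X.col '' (I ∩ cycLift b ⁻¹' Set.Iic j)) := by
  rw [h.isGreedyBasis.span_image_inter_preimage (isLowerSet_Iic j),
    fX_pred_le_iff_col_mem_span h.succ haj hj]

lemma col_left_mem_span (h : IsBridgeBasis X a b I) :
    X.col a ∈ Submodule.span ℝ (X.col '' (I ∩ cycLift b ⁻¹' Set.Iic (fX X a))) :=
  (h.fX_left_le_iff h.lt_fX.le (h.fX_lt_fX.trans h.fX_lt)).1 le_rfl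

lemma right_mem (h : IsBridgeBasis X a b I) : b ∈ I := by
  by_contra hb
  have hempty : {y ∈ (I : Set (Fin n)) | cycLift b y ≤ cycLift b b} = ∅ := by
    refine Set.eq_empty_of_forall_notMem fun y ⟨hyI, hy⟩ => ?_
    rw [cycLift_self] at hy
    exact hy.not_gt (lt_cycLift fun hyb => hb (hyb ▸ hyI))
  have hspan := h.isGreedyBasis.mem_span b
  rw [hempty] at hspan
  have hle : fX X b ≤ b := (fX_le_iff_col_mem_span le_rfl (by have := b.isLt; omega)).2
    (Submodule.span_mono (Set.image_mono (Set.empty_subset _)) hspan)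
  exact hle.not_gt (h.right_le_fX.trans_lt h.fX_lt_fX)

lemma left_notMem (h : IsBridgeBasis X a b I) : a ∉ I := fun ha => by
  have hlt : fX X a < cycLift b a := by
    have := h.fX_lt_fX
    have := h.fX_lt
    have := h.succ
    rw [cycLift_of_succ h.succ]
    omega
  have hsub : (I ∩ cycLift b ⁻¹' Set.Iic (fX X a) : Set (Fin n)) ⊆ I \ {a} := fun x hx =>
    ⟨hx.1, fun hxa : x = a => hlt.not_ge (hxa ▸ hx.2)⟩
  exact h.isGreedyBasis.linearIndepOn.notMem_span ha
    (Submodule.span_mono (Set.image_mono hsub) h.col_left_mem_span)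

lemma card_erase_add_one (h : IsBridgeBasis X a b I) : #(I.erase b) + 1 = k := by
  rw [Finset.card_erase_add_one h.right_mem, card_of_minorOn_ne_zero h.minorOn_ne_zero]

lemma linearIndepOn_erase (h : IsBridgeBasis X a b I) :
    LinearIndepOn ℝ X.col (I.erase b : Set (Fin n)) :=
  h.isGreedyBasis.linearIndepOn.mono (by simp)

lemma col_right_mem_span_insert (h : IsBridgeBasis X a b I) {c : Fin n}
    (hc : X.col c ∉ Submodule.span ℝ (X.col '' (I.erase b))) :
    X.col b ∈ Submodule.span ℝ
      (X.col '' insert c {y ∈ (I.erase b : Set (Fin n)) | cycLift b y ≤ cycLift b c}) := by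
  have hsub : {y ∈ (I : Set (Fin n)) | cycLift b y ≤ cycLift b c} ⊆
      insert b {y ∈ (I.erase b : Set (Fin n)) | cycLift b y ≤ cycLift b c} := fun y hy => by
    rcases eq_or_ne y b with rfl | hyb
    · exact Set.mem_insert _ _
    · exact Or.inr ⟨by simpa [hyb] using hy.1, hy.2⟩
  have hspan := Submodule.span_mono (Set.image_mono hsub) (h.isGreedyBasis.mem_span c)
  rw [Set.image_insert_eq] at hspan ⊢
  exact mem_span_insert_exchange hspan fun hc' =>
    hc (Submodule.span_mono (Set.image_mono fun y hy => hy.1) hc')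

lemma fX_right_le_cycLift (h : IsBridgeBasis X a b I) {c : Fin n} (hcb : c ≠ b)
    (hc : X.col c ∉ Submodule.span ℝ (X.col '' (I.erase b))) : fX X b ≤ cycLift b c := by
  rw [fX_le_iff_col_mem_span (le_cycLift b c) (cycLift_lt b c)]
  refine Submodule.span_mono (Set.image_mono ?_) (h.col_right_mem_span_insert hc)
  exact Set.insert_subset ⟨lt_cycLift hcb, le_rfl⟩
    fun y hy => ⟨lt_cycLift (Finset.ne_of_mem_erase hy.1), hy.2⟩

lemma col_sub_smul_mem_span (h : IsBridgeBasis X a b I) {t : ℝ}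
    (ht : minorOn X I = t * minorOn X (insert a (I.erase b))) :
    X.col b - t • X.col a ∈
      Submodule.span ℝ (X.col '' (cycLift b ⁻¹' Set.Ioc (b : ℤ) (fX X a))) := by
  have hbS : b ∉ I.erase b := Finset.notMem_erase b I
  have haS : a ∉ I.erase b := fun ha => h.left_notMem (Finset.mem_of_mem_erase ha)
  have hS : X.col b - t • X.col a ∈ Submodule.span ℝ (X.col '' (I.erase b)) := by
    refine mem_span_of_minorOn_updateCol_eq_zero h.linearIndepOn_erase h.card_erase_add_one hbS ?_
    rw [minorOn_updateCol_sub_smul_insert h.succ t hbS, if_neg haS,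
      Finset.insert_erase h.right_mem, ht, sub_self]
  have hP : X.col b - t • X.col a ∈
      Submodule.span ℝ (X.col '' (I ∩ cycLift b ⁻¹' Set.Iic (fX X a))) := by
    refine Submodule.sub_mem _ (Submodule.subset_span (Set.mem_image_of_mem _ ?_))
      (Submodule.smul_mem _ t h.col_left_mem_span)
    exact ⟨h.right_mem, (cycLift_self b).trans_le h.right_le_fX⟩
  have hind : LinearIndepOn ℝ X.col ((I.erase b : Set (Fin n)) ∪
      (I ∩ cycLift b ⁻¹' Set.Iic (fX X a))) :=
    h.isGreedyBasis.linearIndepOn.mono (Set.union_subset (by simp) Set.inter_subset_left)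
  refine Submodule.span_mono (Set.image_mono fun x hx => ?_) (mem_span_image_inter hind hS hP)
  exact ⟨lt_cycLift (Finset.ne_of_mem_erase hx.1), hx.2.2⟩

lemma exists_ne_col_notMem_span (h : IsBridgeBasis X a b I) :
    ∃ c ≠ b, X.col c ∉ Submodule.span ℝ (X.col '' (I.erase b)) := by
  by_contra! hall
  refine h.isGreedyBasis.linearIndepOn.notMem_span h.right_mem ?_
  rw [← Finset.coe_erase]
  refine Submodule.span_le.2 ?_ h.col_right_mem_span
  rintro _ ⟨c, hc, rfl⟩
  exact hall c fun hcb => hc.1.ne' (hcb ▸ cycLift_self b)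

lemma exists_col_left_notMem_span (h : IsBridgeBasis X a b I) :
    ∃ y, cycLift b y = fX X a ∧ X.col a ∉ Submodule.span ℝ (X.col '' (I.erase y)) := by
  have hlt := h.fX_lt_fX.trans h.fX_lt
  obtain ⟨y, hy⟩ := exists_cycLift_eq h.right_le_fX hlt
  refine ⟨y, hy, fun hspan => ?_⟩
  have hind : LinearIndepOn ℝ X.col ((I.erase y : Set (Fin n)) ∪
      (I ∩ cycLift b ⁻¹' Set.Iic (fX X a))) :=
    h.isGreedyBasis.linearIndepOn.mono (Set.union_subset (by simp) Set.inter_subset_left)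
  have hsub : (I.erase y : Set (Fin n)) ∩ (I ∩ cycLift b ⁻¹' Set.Iic (fX X a)) ⊆
      I ∩ cycLift b ⁻¹' Set.Iic (fX X a - 1) := fun x hx => by
    have hne := (cycLift_injective b).ne (Finset.ne_of_mem_erase hx.1)
    exact ⟨hx.2.1, Int.le_sub_one_of_lt (lt_of_le_of_ne hx.2.2 (hy ▸ hne))⟩
  have hpred : fX X a ≤ fX X a - 1 :=
    (h.fX_left_le_iff (by have := h.lt_fX; omega) (by omega)).2
      (Submodule.span_mono (Set.image_mono hsub)
        (mem_span_image_inter hind hspan h.col_left_mem_span))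
  omega

lemma minorOn_insert_left_ne_zero (h : IsBridgeBasis X a b I) (hX : ∀ J, 0 ≤ minorOn X J) :
    minorOn X (insert a (I.erase b)) ≠ 0 := by
  obtain ⟨y, hy, hay⟩ := h.exists_col_left_notMem_span
  obtain ⟨c, hcb, hc⟩ := h.exists_ne_col_notMem_span
  by_cases hyS : y ∈ I.erase b
  · intro hzero
    have hby : b ≠ y := (Finset.ne_of_mem_erase hyS).symm
    have hyI : y ∈ I := Finset.mem_of_mem_erase hyS
    have hcS := minorOn_insert_ne_zero h.linearIndepOn_erase h.card_erase_add_one hc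
    have hca : c ≠ a := fun hca => hcS (hca ▸ hzero)
    have hcI : c ∉ I := fun hcI =>
      hc (Submodule.subset_span (Set.mem_image_of_mem _ (by simp [hcb, hcI])))
    have hlt : cycLift b y < cycLift b c :=
      (hy.trans_lt h.fX_lt_fX).trans_le (h.fX_right_le_cycLift hcb hc)
    have haJ : minorOn X (insert a (I.erase y)) ≠ 0 := by
      refine minorOn_insert_ne_zero (h.isGreedyBasis.linearIndepOn.mono (by simp)) ?_ hay
      rw [Finset.card_erase_add_one hyI, card_of_minorOn_ne_zero h.minorOn_ne_zero]
    have hthree := minorOn_three_term_cyclic X (R := (I.erase b).erase y) (x := y) (y := c)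
      h.succ (by simp [h.left_notMem]) (by simp) (by simp) (by simp [hcI]) hby.symm hca hlt
    rw [Finset.insert_erase hyS, hzero, mul_zero, Finset.insert_comm b a, Finset.insert_comm y c,
      Finset.insert_erase hyS, Finset.erase_right_comm,
      Finset.insert_erase (Finset.mem_erase.2 ⟨hby, h.right_mem⟩)] at hthree
    have hpos := mul_pos ((hX _).lt_of_ne' haJ) ((hX _).lt_of_ne' hcS)
    exact (add_pos_of_nonneg_of_pos (mul_nonneg (hX _) (hX _)) hpos).ne hthree
  · refine minorOn_insert_ne_zero h.linearIndepOn_erase h.card_erase_add_one fun ha => hay ?_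
    refine Submodule.span_mono (Set.image_mono fun x hx => ?_) ha
    exact Finset.mem_erase.2 ⟨fun hxy => hyS (hxy ▸ hx), Finset.mem_of_mem_erase hx⟩

lemma exists_mem_erase_cycLift_lt (h : IsBridgeBasis X a b I) (hT : minorOn X (insert a T) ≠ 0)
    (haT : a ∉ T) (hbT : b ∉ T) {t : Fin n} (ht : t ∈ T) (htI : t ∉ I) :
    ∃ s ∈ I.erase b, s ∉ T ∧ cycLift b s < cycLift b t := by
  by_contra! hsub
  have hind := linearIndepOn_of_minorOn_ne_zero hT
  have hsubT : {y ∈ (I.erase b : Set (Fin n)) | cycLift b y ≤ cycLift b t} ⊆ T \ {t} :=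
    fun y ⟨hy, hyt⟩ => by
      have hne : y ≠ t := fun hyt => htI (hyt ▸ Finset.mem_of_mem_erase hy)
      have hlt := hyt.lt_of_ne ((cycLift_injective b).ne hne)
      exact ⟨by_contra fun hyT => (hsub y hy hyT).not_gt hlt, hne⟩
  by_cases htS : X.col t ∈ Submodule.span ℝ (X.col '' (I.erase b))
  · have hindI : LinearIndepOn ℝ X.col ((I.erase b : Set (Fin n)) ∪
        {y ∈ (I : Set (Fin n)) | cycLift b y ≤ cycLift b t}) :=
      h.isGreedyBasis.linearIndepOn.mono (Set.union_subset (by simp) fun y hy => hy.1)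
    have hspan := mem_span_image_inter hindI htS (h.isGreedyBasis.mem_span t)
    refine hind.notMem_span (Finset.mem_insert_of_mem ht)
      (Submodule.span_mono (Set.image_mono fun y hy => ?_) hspan)
    obtain ⟨hyT, hyt⟩ := hsubT ⟨hy.1, hy.2.2⟩
    exact ⟨Finset.mem_insert_of_mem hyT, hyt⟩
  · have htb : t ≠ b := fun htb => hbT (htb ▸ ht)
    have hlt := h.fX_lt_fX.trans_le (h.fX_right_le_cycLift htb htS)
    have hle : Submodule.span ℝ (X.col '' (I ∩ cycLift b ⁻¹' Set.Iic (fX X a))) ≤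
        Submodule.span ℝ (X.col '' T) := by
      rw [Submodule.span_le]
      rintro _ ⟨y, ⟨hyI, hy⟩, rfl⟩
      rcases eq_or_ne y b with rfl | hyb
      · refine Submodule.span_mono (Set.image_mono ?_) (h.col_right_mem_span_insert htS)
        exact Set.insert_subset ht (hsubT.trans Set.sdiff_subset)
      · refine Submodule.subset_span (Set.mem_image_of_mem _ (hsubT ⟨?_, hy.trans hlt.le⟩).1)
        exact Finset.mem_erase.2 ⟨hyb, hyI⟩
    rw [Finset.coe_insert] at hind
    exact hind.notMem_span_of_insert haT (hle h.col_left_mem_span)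

lemma exists_exchange (h : IsBridgeBasis X a b I) (hS : minorOn X (insert a (I.erase b)) ≠ 0)
    (hT : minorOn X (insert a T) ≠ 0) (haT : a ∉ T) (hbT : b ∉ T) (hTS : T ≠ I.erase b) :
    ∃ s ∈ I.erase b, s ∉ T ∧ ∃ t ∈ T, t ∉ I ∧ cycLift b s < cycLift b t ∧
      minorOn X (insert a (insert s (T.erase t))) ≠ 0 := by
  have hcard : #T + 1 = k := by
    rw [← Finset.card_insert_of_notMem haT, card_of_minorOn_ne_zero hT]
  have hnonempty : (I.erase b \ T).Nonempty := by
    rw [Finset.sdiff_nonempty]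
    have := h.card_erase_add_one
    exact fun hsub => hTS (Finset.eq_of_subset_of_card_le hsub (by omega)).symm
  obtain ⟨s, hs, hmin⟩ := Finset.exists_min_image _ (cycLift b) hnonempty
  obtain ⟨hsS, hsT⟩ := Finset.mem_sdiff.1 hs
  have has : a ≠ s := fun has => h.left_notMem (has ▸ Finset.mem_of_mem_erase hsS)
  obtain ⟨t, ht, htA, hexch⟩ := exists_linearIndepOn_insert_sdiff
    (linearIndepOn_of_minorOn_ne_zero hT) (span_col_image_eq_top hT ▸ Submodule.mem_top)
    ((linearIndepOn_of_minorOn_ne_zero hS).notMem_span (Finset.mem_insert_of_mem hsS))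
  have hta : t ≠ a := by
    rintro rfl
    exact htA ⟨Finset.mem_insert_self _ _, has⟩
  have htT : t ∈ T := Finset.mem_of_mem_insert_of_ne ht hta
  have htI : t ∉ I := fun htI => by
    have htS : t ∈ I.erase b := Finset.mem_erase.2 ⟨fun htb => hbT (htb ▸ htT), htI⟩
    exact htA ⟨Finset.mem_insert_of_mem htS, fun hts : t = s => hsT (hts ▸ htT)⟩
  obtain ⟨s', hs', hs'T, hs't⟩ := h.exists_mem_erase_cycLift_lt hT haT hbT htT htI
  refine ⟨s, hsS, hsT, t, htT, htI, (hmin s' (by simp [hs', hs'T])).trans_lt hs't, ?_⟩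
  have hset : ((insert a (insert s (T.erase t)) : Finset (Fin n)) : Set (Fin n)) =
      insert s (↑(insert a T) \ {t}) := by
    rw [Finset.insert_comm, ← Finset.erase_insert_of_ne hta.symm, Finset.coe_insert,
      Finset.coe_erase]
  rw [minorOn_ne_zero_iff, hset]
  · exact hexch
  · rw [Finset.card_insert_of_notMem (by simp [has, haT]),
      Finset.card_insert_of_notMem (by simp [hsT]), Finset.card_erase_add_one htT, hcard]

lemma minorOn_mul_minorOn_le (h : IsBridgeBasis X a b I) (hX : ∀ J, 0 ≤ minorOn X J)
    (haT : a ∉ T) (hbT : b ∉ T) :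
    minorOn X I * minorOn X (insert a T) ≤
      minorOn X (insert b T) * minorOn X (insert a (I.erase b)) := by
  induction hD : T \ I using Finset.strongInduction generalizing T with | _ D ih
  subst hD
  rcases eq_or_ne (minorOn X (insert a T)) 0 with hT | hT
  · rw [hT, mul_zero]
    exact mul_nonneg (hX _) (hX _)
  rcases eq_or_ne T (I.erase b) with rfl | hTS
  · rw [Finset.insert_erase h.right_mem]
  obtain ⟨s, hsS, hsT, t, htT, htI, hst, hT'⟩ :=
    h.exists_exchange (h.minorOn_insert_left_ne_zero hX) hT haT hbT hTS
  obtain ⟨hsb, hsI⟩ := Finset.mem_erase.1 hsS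
  have hta : t ≠ a := fun hta => haT (hta ▸ htT)
  have has : a ≠ s := fun has => h.left_notMem (has ▸ hsI)
  have hdecr : insert s (T.erase t) \ I ⊂ T \ I := by
    rw [Finset.insert_sdiff_of_mem _ hsI, Finset.erase_sdiff_comm]
    exact Finset.erase_ssubset (Finset.mem_sdiff.2 ⟨htT, htI⟩)
  have hih := ih _ hdecr (T := insert s (T.erase t)) (by simp [has, haT])
    (by simp [hsb.symm, hbT]) rfl
  have hthree := minorOn_three_term_cyclic X (R := T.erase t) h.succ (by simp [haT])
    (by simp [hbT]) (by simp [hsT]) (by simp) hsb hta hst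
  rw [Finset.insert_erase htT] at hthree
  have hmono : minorOn X (insert b (insert s (T.erase t))) * minorOn X (insert a T) ≤
      minorOn X (insert b T) * minorOn X (insert a (insert s (T.erase t))) :=
    hthree.symm ▸ le_add_of_nonneg_right (mul_nonneg (hX _) (hX _))
  refine le_of_mul_le_mul_right ?_ ((hX _).lt_of_ne' hT')
  linear_combination mul_le_mul_of_nonneg_left hih (hX (insert a T)) +
    mul_le_mul_of_nonneg_left hmono (hX (insert a (I.erase b)))

lemma isTNN_updateCol (h : IsBridgeBasis X a b I) (hX : IsTNN X) :
    IsTNN (X.updateCol b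
      (X.col b - (minorOn X I / minorOn X (insert a (I.erase b))) • X.col a)) := by
  have hne := h.minorOn_insert_left_ne_zero hX.minorOn_nonneg
  have hpos := (hX.minorOn_nonneg _).lt_of_ne' hne
  refine ⟨rank_eq_of_minorOn_ne_zero (I := insert a (I.erase b)) ?_, fun J _ => ?_⟩
  · rwa [minorOn_updateCol_of_notMem (by simp [h.ne.symm])]
  by_cases hb : b ∈ J
  · rw [← Finset.insert_erase hb,
      minorOn_updateCol_sub_smul_insert h.succ _ (Finset.notMem_erase b J)]
    split_ifs with ha
    · rw [mul_zero, sub_zero]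
      exact hX.minorOn_nonneg _
    · rw [sub_nonneg, div_mul_eq_mul_div, div_le_iff₀ hpos]
      exact h.minorOn_mul_minorOn_le hX.minorOn_nonneg ha (Finset.notMem_erase b J)
  · rw [minorOn_updateCol_of_notMem hb]
    exact hX.minorOn_nonneg J

end IsBridgeBasis

theorem stmt12 (k n : ℕ) (X : Matrix (Fin k) (Fin n) ℝ) (hrank : X.rank = k)
    (i : ℕ) (hi : i + 1 < n)
    (hf1 : (i:ℤ) < fX X i) (hf2 : fX X i < fX X (i+1)) (hf3 : fX X (i+1) < (i:ℤ) + n + 1)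
    (ifin ifin1 : Fin n) (hifin : (ifin:ℕ) = i) (hifin1 : (ifin1:ℕ) = i+1)
    (Ii1 : Finset (Fin n)) (hIcard : Ii1.card = k)
    (hImin : minorOn X Ii1 ≠ 0)
    (hIlex : ∀ K : Finset (Fin n), K.card = k → minorOn X K ≠ 0 → lexLE ifin1 Ii1 K) :
    (ifin1 ∈ Ii1 ∧ ifin ∉ Ii1) ∧
    (∀ t : ℝ, minorOn X (insert ifin (Ii1.erase ifin1)) ≠ 0 →
      t = minorOn X Ii1 / minorOn X (insert ifin (Ii1.erase ifin1)) →
      fX (X * xB n (i+1) (-t)) i = fX X (i+1) ∧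
      fX (X * xB n (i+1) (-t)) (i+1) = fX X i ∧
      ∀ r : ℕ, r < n → r ≠ i → r ≠ i+1 → fX (X * xB n (i+1) (-t)) r = fX X r) ∧
    (IsTNN X →
      minorOn X (insert ifin (Ii1.erase ifin1)) ≠ 0 ∧
      IsTNN (X * xB n (i+1)
        (-(minorOn X Ii1 / minorOn X (insert ifin (Ii1.erase ifin1)))))) := by
  subst hifin
  have hb : (ifin : ℤ) + 1 = ifin1 := by omega
  rw [hb] at hf2 hf3 ⊢
  have h : IsBridgeBasis X ifin ifin1 Ii1 :=
    { succ := hifin1, lt_fX := hf1, fX_lt_fX := hf2, fX_lt := by omega,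
      minorOn_ne_zero := hImin, isGreedyBasis := isGreedyBasis_of_lexLE hImin hIlex }
  simp only [xB_eq_transvection rfl hifin1, mul_transvection_neg]
  refine ⟨⟨h.right_mem, h.left_notMem⟩, fun t hne ht => ?_, fun hX =>
    ⟨h.minorOn_insert_left_ne_zero hX.minorOn_nonneg, h.isTNN_updateCol hX⟩⟩
  have ht0 : t ≠ 0 := ht ▸ div_ne_zero hImin hne
  have hmem := h.col_sub_smul_mem_span ((div_eq_iff hne).1 ht.symm)
  refine ⟨h.fX_updateCol_left ht0 hmem, h.fX_updateCol_right ht0 hmem, fun r hr hra hrb => ?_⟩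
  exact fX_updateCol_sub_smul_of_ne hifin1 t (r := ⟨r, hr⟩) (Fin.ne_of_val_ne hra)
    (Fin.ne_of_val_ne (hifin1 ▸ hrb))

end
end

section
/- For every a ∈ [2n], the map σ ↦ I_a(σ) is a bijection from NC_n onto the set of Catalan subsets of [2n] with respect to ≤_a. In particular, I_a(σ) is a well-defined (n−1)-element subset of [2n] and is a Catalan subset with respect to ≤_a for every noncrossing partition σ of [n]. -/
open Finset

noncomputable section
open scoped Classical

/-!
Merge `σ` and its dual into one equivalence relation on the `2n` points of the circle: its classes
have constant parity, and each parity is the dual of the other. Such a *medial* relation stays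
medial when the circle is rotated, even if this exchanges the two parities, so the shifted order
`≤_a` may be replaced by the usual one and `I_a(σ)` is the set of points that are not last in their
class.

If `x < y` are consecutive in their class, then `x + 1` and `y - 1` are related and `y - 1` is last
in its class. Hence, in the lattice path that steps up after the points that are not last, two
points are related iff the path is at both of them as low as anywhere in between. This recovers the
relation from the path. Conversely, in any path from `1` that stays nonnegative until a final step
to `-1`, points that see each other in this sense form a medial relation: two points of equal
parity that do not see each other are separated by a mutually visible pair one step below the
higher of the two. With one more up step in front, these paths are the Dyck paths of the Catalan
subsets.
-/

section Medial

variable {N : ℕ} {E : Fin N → Fin N → Prop} {x y u v : Fin N}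

/-- The chord joining `x` to `y`, with its ends moved to just after `x` and `y`, separates `u` from
`v` on the circle. Counting the ends before `u` and before `v` modulo 2 makes the condition
independent of where the circle is cut open. -/
def Crosses (x y u v : Fin N) : Prop :=
  ¬((x < u ↔ y < u) ↔ (x < v ↔ y < v))

theorem Crosses.symm (hxu : x ≠ u) (hxv : x ≠ v) (hyu : y ≠ u) (hyv : y ≠ v)
    (h : Crosses x y u v) : Crosses u v x y := by
  simp only [Crosses] at *
  omega

theorem fin_add_lt_add_right_iff (a : Fin N) :
    x + a < u + a ↔ (x < u ↔ ((x : ℕ) + a < N ↔ (u : ℕ) + a < N)) := by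
  simp only [Fin.lt_def, Fin.val_add_eq_ite]
  split_ifs <;> omega

theorem crosses_add_right_iff (a : Fin N) :
    Crosses (x + a) (y + a) (u + a) (v + a) ↔ Crosses x y u v := by
  simp only [Crosses, fin_add_lt_add_right_iff a]
  omega

/-- The equivalence relation on the points of the circle whose classes are the blocks of a
noncrossing partition on the points of one parity and the blocks of its dual on the others. The
single condition says that either half is the dual of the other. -/
def IsMedial (E : Fin N → Fin N → Prop) : Prop :=
  ∀ x y, E x y ↔ (x : ℕ) % 2 = (y : ℕ) % 2 ∧
    ∀ u v, E u v → (u : ℕ) % 2 ≠ (x : ℕ) % 2 → ¬Crosses x y u v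

namespace IsMedial

theorem parity_eq (hE : IsMedial E) (h : E x y) : (x : ℕ) % 2 = (y : ℕ) % 2 :=
  ((hE x y).1 h).1

theorem not_crosses (hE : IsMedial E) (hxy : E x y) (huv : E u v)
    (hux : (u : ℕ) % 2 ≠ (x : ℕ) % 2) : ¬Crosses x y u v :=
  ((hE x y).1 hxy).2 u v huv hux

theorem refl (hE : IsMedial E) (x : Fin N) : E x x :=
  (hE x x).2 ⟨rfl, fun u v _ _ => by simp [Crosses]⟩

theorem symm (hE : IsMedial E) (h : E x y) : E y x := by
  refine (hE y x).2 ⟨(hE.parity_eq h).symm, fun u v huv hu hc => ?_⟩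
  have hxy := hE.parity_eq h
  have := hE.not_crosses h huv (by omega)
  simp only [Crosses] at *
  omega

theorem trans (hE : IsMedial E) {z : Fin N} (hxy : E x y) (hyz : E y z) : E x z := by
  have hx := hE.parity_eq hxy
  refine (hE x z).2 ⟨hx.trans (hE.parity_eq hyz), fun u v huv hu hc => ?_⟩
  have h₁ := hE.not_crosses hxy huv hu
  have h₂ := hE.not_crosses hyz huv (by omega)
  simp only [Crosses] at *
  omega

theorem exists_crosses (hE : IsMedial E) (hp : (x : ℕ) % 2 = (y : ℕ) % 2) (h : ¬E x y) :
    ∃ u v, E u v ∧ (u : ℕ) % 2 ≠ (x : ℕ) % 2 ∧ Crosses x y u v := by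
  by_contra! hc
  exact h ((hE x y).2 ⟨hp, hc⟩)

/-- A chord of the other parity separating `x` from `u` would cross `xy` or `uv`. -/
theorem rel_of_crosses (hE : IsMedial E) (hxy : E x y) (huv : E u v)
    (hp : (x : ℕ) % 2 = (u : ℕ) % 2) (hc : Crosses x y u v) : E x u := by
  by_contra h
  obtain ⟨s, t, hst, hs, hcr⟩ := hE.exists_crosses hp h
  have hpt := hE.parity_eq hst
  have hpy := hE.parity_eq hxy
  have hpv := hE.parity_eq huv
  have h₁ := hE.not_crosses hxy hst hs
  have h₂ := hE.not_crosses huv hst (by omega)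
  simp only [Crosses] at *
  omega

theorem ext_of_even {E' : Fin N → Fin N → Prop} (hE : IsMedial E) (hE' : IsMedial E')
    (h : ∀ x y : Fin N, (x : ℕ) % 2 = 0 → (E x y ↔ E' x y)) : E = E' := by
  funext x y
  refine propext ?_
  rcases Nat.mod_two_eq_zero_or_one x with hx | hx
  · exact h x y hx
  · rw [hE x y, hE' x y]
    refine and_congr_right fun _ => forall₂_congr fun u v => ?_
    rw [forall_comm, forall_comm (p := fun (_ : E' u v) _ => _)]
    exact forall_congr' fun hu => by rw [h u v (by omega)]

end IsMedial

/-- The relation `E` read from the circle whose points are renumbered by `x ↦ x - a`. -/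
def rotateRel (a : Fin N) (E : Fin N → Fin N → Prop) : Fin N → Fin N → Prop :=
  fun x y => E (x + a) (y + a)

theorem add_val_mod_two (hN : Even N) (x a : Fin N) :
    ((x + a : Fin N) : ℕ) % 2 = ((x : ℕ) + a) % 2 := by
  rw [Fin.val_add, Nat.mod_mod_of_dvd _ hN.two_dvd]

theorem isMedial_rotateRel [NeZero N] (hN : Even N) (a : Fin N) (hE : IsMedial E) :
    IsMedial (rotateRel a E) := by
  intro x y
  have parity_iff (z w : Fin N) : ((z + a : Fin N) : ℕ) % 2 = ((w + a : Fin N) : ℕ) % 2 ↔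
      (z : ℕ) % 2 = (w : ℕ) % 2 := by
    rw [add_val_mod_two hN, add_val_mod_two hN]
    omega
  rw [rotateRel, hE, parity_iff]
  refine and_congr_right fun _ => ((Equiv.addRight a).forall_congr fun u =>
    (Equiv.addRight a).forall_congr fun v => ?_).symm
  simp only [Equiv.coe_addRight, ne_eq, parity_iff, crosses_add_right_iff, rotateRel]

theorem leftInverse_rotateRel [NeZero N] {a b : Fin N} (h : a + b = 0) :
    Function.LeftInverse (rotateRel a) (rotateRel b) := fun E => by
  funext x y
  simp only [rotateRel, add_assoc, h, add_zero]

theorem bijOn_rotateRel [NeZero N] (hN : Even N) (a : Fin N) :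
    Set.BijOn (rotateRel a) {E | IsMedial E} {E | IsMedial E} :=
  Set.InvOn.bijOn (f' := rotateRel (-a))
    ⟨(leftInverse_rotateRel (neg_add_cancel a)).leftInvOn _,
      (leftInverse_rotateRel (add_neg_cancel a)).leftInvOn _⟩
    (fun _ hE => isMedial_rotateRel hN a hE) (fun _ hE => isMedial_rotateRel hN (-a) hE)

/-- The points that are not the greatest of their class under `E`. -/
def nonLast (E : Fin N → Fin N → Prop) : Finset (Fin N) :=
  {x | ∃ y, E x y ∧ x < y}

theorem mem_nonLast : x ∈ nonLast E ↔ ∃ y, E x y ∧ x < y := by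
  simp [nonLast]

end Medial

section Excursion

variable {N : ℕ} {S : Finset (Fin N)} {x y u v : Fin N}

/-- The height, after its first `z + 1` letters, of the lattice path with an up step at the
positions `0` and `x + 1` for `x ∈ S`, and down steps elsewhere. -/
def height (S : Finset (Fin N)) (z : ℕ) : ℤ :=
  2 * #(S.filter fun y : Fin N => (y : ℕ) < z) + 1 - z

theorem height_zero : height S 0 = 1 := by
  simp [height]

theorem height_emod_two (S : Finset (Fin N)) (z : ℕ) : height S z % 2 = (z + 1) % 2 := by
  rw [height]
  omega

theorem height_succ (S : Finset (Fin N)) (x : Fin N) :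
    height S (x + 1) = height S x + if x ∈ S then 1 else -1 := by
  have hlt : (S.filter fun y : Fin N => (y : ℕ) < x + 1) =
      (S.filter fun y : Fin N => (y : ℕ) < x) ∪ (S.filter fun y => y = x) := by
    ext y
    simp only [mem_filter, mem_union, Order.lt_add_one_iff, le_iff_lt_or_eq, Fin.val_inj]
    tauto
  have hdisj : Disjoint (S.filter fun y : Fin N => (y : ℕ) < x) (S.filter fun y => y = x) :=
    disjoint_filter.2 fun y _ hy hyx => by omega
  rw [height, height, hlt, card_union_of_disjoint hdisj, filter_eq']
  split_ifs <;> push_cast [card_singleton, card_empty] <;> ring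

theorem height_succ_of_mem (hx : x ∈ S) : height S (x + 1) = height S x + 1 := by
  rw [height_succ, if_pos hx]

theorem height_succ_of_notMem (hx : x ∉ S) : height S (x + 1) = height S x - 1 := by
  rw [height_succ, if_neg hx, sub_eq_add_neg]

/-- The path given by `height S` stays nonnegative until it ends with a step to `-1`. -/
def IsExcursion (S : Finset (Fin N)) : Prop :=
  (∀ z < N, 0 ≤ height S z) ∧ height S N = -1

theorem isCatalan_iff_isExcursion {n : ℕ} [NeZero n] {S : Finset (Fin (2 * n))} :
    IsCatalan S ↔ IsExcursion S := by
  have hn : n ≠ 0 := NeZero.ne n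
  -- In `IsCatalan` the set `S` is coerced to `Finset ℕ` before its image is taken.
  have hcoe : (S.image fun x => (x : ℕ) + 1) = S.image fun x : Fin (2 * n) => (x : ℕ) + 1 := by
    ext
    simp
  have hcard (z : ℕ) : #{w ∈ insert 0 (S.image fun x : Fin (2 * n) => (x : ℕ) + 1) | w < z + 1} =
      #(S.filter fun y : Fin (2 * n) => (y : ℕ) < z) + 1 := by
    rw [filter_insert, if_pos z.succ_pos, card_insert_of_notMem (by simp), filter_image,
      card_image_of_injective _ fun x y h => by simpa [Fin.ext_iff] using h]
    simp only [Nat.add_lt_add_iff_right]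
  have hfull : height S (2 * n) = 2 * #S + 1 - (2 * n : ℕ) := by
    rw [height, filter_true_of_mem fun y _ => y.isLt]
  rw [IsCatalan, IsExcursion, hcoe, hfull, and_comm]
  refine and_congr ⟨fun h z hz => ?_, fun h p hp => ?_⟩ (by omega)
  · have := h (z + 1) hz
    rw [hcard] at this
    rw [height]
    omega
  · rcases p with _ | z
    · exact Nat.zero_le _
    · have := h z hp
      rw [height] at this
      rw [hcard]
      omega

/-- The path given by `height S` is at `x` and at `y` as low as anywhere between them. -/
def Visible (S : Finset (Fin N)) (x y : Fin N) : Prop :=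
  ∀ z : ℕ, min (x : ℕ) y ≤ z → z ≤ max (x : ℕ) y → height S x ≤ height S z ∧ height S y ≤ height S z

namespace Visible

theorem symm (h : Visible S x y) : Visible S y x := fun z hz hz' =>
  (h z (by omega) (by omega)).symm

theorem height_eq (h : Visible S x y) : height S x = height S y :=
  le_antisymm (h y (by omega) (by omega)).1 (h x (by omega) (by omega)).2

theorem parity_eq (h : Visible S x y) : (x : ℕ) % 2 = (y : ℕ) % 2 := by
  have := h.height_eq
  have := height_emod_two S x
  have := height_emod_two S y
  omega

theorem height_le_of_crosses (hxy : Visible S x y) (huv : Visible S u v)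
    (hc : Crosses x y u v) : height S x ≤ height S u := by
  have hbetween : (min (x : ℕ) y ≤ u ∧ (u : ℕ) ≤ max (x : ℕ) y) ∨
      (min (x : ℕ) y ≤ v ∧ (v : ℕ) ≤ max (x : ℕ) y) := by
    simp only [Crosses] at hc
    omega
  rcases hbetween with h | h
  · exact (hxy u h.1 h.2).1
  · exact (hxy v h.1 h.2).1.trans_eq huv.height_eq.symm

theorem not_crosses (hxy : Visible S x y) (huv : Visible S u v)
    (hp : (u : ℕ) % 2 ≠ (x : ℕ) % 2) : ¬Crosses x y u v := fun hc => by
  have := hxy.parity_eq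
  have := huv.parity_eq
  have hle := hxy.height_le_of_crosses huv hc
  have hge := huv.height_le_of_crosses hxy
    (hc.symm (by omega) (by omega) (by omega) (by omega))
  have := height_emod_two S x
  have := height_emod_two S u
  omega

theorem mem_of_lt (h : Visible S x y) (hxy : x < y) : x ∈ S := by
  by_contra hx
  have := (h (x + 1) (by omega) (by omega)).1
  rw [height_succ_of_notMem hx] at this
  omega

end Visible

namespace IsExcursion

theorem exists_lt_visible (hS : IsExcursion S) (hx : x ∈ S) : ∃ y, x < y ∧ Visible S x y := by
  have hex : ∃ w, (x : ℕ) < w ∧ height S w ≤ height S x :=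
    ⟨N, x.isLt, by have := hS.1 x x.isLt; have := hS.2; omega⟩
  obtain ⟨hxw, hle⟩ := Nat.find_spec hex
  have hmin {z : ℕ} (hxz : (x : ℕ) < z) (hzw : z < Nat.find hex) : height S x < height S z :=
    lt_of_not_ge fun h => Nat.find_min hex hzw ⟨hxz, h⟩
  have hwN : Nat.find hex ≤ N := Nat.find_min' hex
    ⟨x.isLt, by have := hS.1 x x.isLt; have := hS.2; omega⟩
  generalize Nat.find hex = w at *
  have := height_succ_of_mem hx
  obtain ⟨p, rfl⟩ : ∃ p : Fin N, w = p + 1 := ⟨⟨w - 1, by omega⟩, by simp only; omega⟩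
  have hxp : (x : ℕ) < p := by
    rcases (Nat.lt_succ_iff.1 hxw).lt_or_eq with h | h
    · exact h
    · rw [← h] at hle
      omega
  have heq : height S (p + 1) = height S x := by
    have := hmin hxp (by omega)
    rw [height_succ] at hle ⊢
    split_ifs at hle ⊢ <;> omega
  have hpN : (p : ℕ) + 1 < N := by
    refine lt_of_le_of_ne hwN fun h => ?_
    have := hS.1 x x.isLt
    have : height S (p + 1) = -1 := by rw [h, hS.2]
    omega
  refine ⟨⟨p + 1, hpN⟩, by simp only [Fin.lt_def]; omega, fun z hz hz' => ?_⟩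
  simp only at hz hz' ⊢
  rcases eq_or_ne z x with rfl | hzx
  · omega
  rcases eq_or_ne z (p + 1) with rfl | hzp
  · omega
  have := hmin (z := z) (by omega) (by omega)
  omega

theorem nonLast_visible (hS : IsExcursion S) : nonLast (Visible S) = S := by
  ext x
  rw [mem_nonLast]
  exact ⟨fun ⟨y, h, hxy⟩ => h.mem_of_lt hxy,
    fun hx => (hS.exists_lt_visible hx).imp fun y h => h.symm⟩

theorem exists_visible_straddling (hS : IsExcursion S) {z : Fin N} (hzy : z ≤ y)
    (hlt : height S z < height S y) :
    ∃ u v, z ≤ u ∧ u < y ∧ y < v ∧ Visible S u v ∧ height S u = height S y - 1 := by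
  obtain ⟨u, hu, hmax⟩ := exists_max_image {u | z ≤ u ∧ u ≤ y ∧ height S u < height S y} id
    ⟨z, by simp [hzy, hlt]⟩
  simp only [mem_filter, mem_univ, true_and, id_eq] at hu hmax
  obtain ⟨hzu, huy, hlow⟩ := hu
  have huy : u < y := lt_of_le_of_ne huy fun h => by simp [h] at hlow
  have habove {w : ℕ} (huw : (u : ℕ) < w) (hwy : w ≤ y) : height S y ≤ height S w := by
    by_contra! h
    have := hmax ⟨w, by omega⟩ ⟨by simp only [Fin.le_def]; omega, hwy, h⟩
    simp only [Fin.le_def] at this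
    omega
  have hstep : height S y ≤ height S (u + 1) := habove (by omega) (by omega)
  have hu : u ∈ S := by
    by_contra h
    have := height_succ_of_notMem h
    omega
  have := height_succ_of_mem hu
  obtain ⟨v, huv, hvis⟩ := hS.exists_lt_visible hu
  refine ⟨u, v, hzu, huy, ?_, hvis, by omega⟩
  by_contra! h
  have := habove huv h
  have := hvis.height_eq
  omega

theorem exists_visible_crosses (hS : IsExcursion S) (hp : (x : ℕ) % 2 = (y : ℕ) % 2)
    (h : ¬Visible S x y) :
    ∃ u v, Visible S u v ∧ (u : ℕ) % 2 ≠ (x : ℕ) % 2 ∧ Crosses x y u v := by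
  wlog hxy : x ≤ y generalizing x y
  · obtain ⟨u, v, huv, hu, hc⟩ := this hp.symm (fun h' => h h'.symm) (by omega)
    exact ⟨u, v, huv, by omega, by simp only [Crosses] at *; omega⟩
  have hx := height_emod_two S x
  have hy := height_emod_two S y
  rcases le_or_gt (height S x) (height S y) with hle | hlt
  · obtain ⟨z, hxz, hzy, hz⟩ : ∃ z : Fin N, x ≤ z ∧ z ≤ y ∧ height S z < height S y := by
      by_contra! hno
      refine h fun z hxz hzy => ?_
      have := hno ⟨z, by omega⟩ (by simp only [Fin.le_def]; omega)
        (by simp only [Fin.le_def]; omega)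
      exact ⟨hle.trans this, this⟩
    obtain ⟨u, v, hzu, huy, hyv, huv, hu⟩ := hS.exists_visible_straddling hzy hz
    have := height_emod_two S u
    exact ⟨u, v, huv, by omega, by simp only [Crosses]; omega⟩
  · have hy0 := hS.1 y y.isLt
    obtain ⟨u, v, -, hux, hxv, huv, hu⟩ := hS.exists_visible_straddling (y := x)
      (z := ⟨0, x.pos⟩) (Nat.zero_le _) (by rw [height_zero]; omega)
    have := height_emod_two S u
    have := huv.height_eq
    have hvy : v < y := by
      by_contra! hyv
      have := (huv y (by omega) (by omega)).1
      omega
    exact ⟨u, v, huv, by omega, by simp only [Crosses]; omega⟩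

theorem isMedial_visible (hS : IsExcursion S) : IsMedial (Visible S) := fun x y =>
  ⟨fun h => ⟨h.parity_eq, fun _ _ => h.not_crosses⟩, fun ⟨hp, hc⟩ => by
    by_contra h
    obtain ⟨u, v, huv, hu, hcr⟩ := hS.exists_visible_crosses hp h
    exact hc u v huv hu hcr⟩

end IsExcursion

end Excursion

section MedialExcursion

variable {N : ℕ} {E : Fin N → Fin N → Prop} {x y z : Fin N}

theorem Visible.concat {S : Finset (Fin N)} (hxy : x ≤ y) (hyz : y ≤ z)
    (h₁ : Visible S x y) (h₂ : Visible S y z) : Visible S x z := by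
  intro w hw hw'
  have := h₁.height_eq
  have := h₂.height_eq
  rcases le_total w y with h | h
  · have := h₁ w (by omega) (by omega)
    omega
  · have := h₂ w (by omega) (by omega)
    omega

theorem visible_of_visible_succ_pred {S : Finset (Fin N)} {p q : Fin N} (hp : (p : ℕ) = x + 1)
    (hq : (q : ℕ) + 1 = y) (hpq : p ≤ q) (hx : x ∈ S) (hqS : q ∉ S) (h : Visible S p q) :
    Visible S x y := by
  have hup := height_succ_of_mem hx
  have hdown := height_succ_of_notMem hqS
  rw [← hp] at hup
  rw [hq] at hdown
  have := h.height_eq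
  intro w hw hw'
  rcases eq_or_ne w x with rfl | hwx
  · omega
  rcases eq_or_ne w y with rfl | hwy
  · omega
  have := h w (by omega) (by omega)
  omega

namespace IsMedial

theorem rel_of_cIoo_eq_Icc (hE : IsMedial E) (hxy : E x y) {p q : Fin N} (hpq : p ≤ q)
    (hp : (p : ℕ) % 2 ≠ (x : ℕ) % 2) (hq : (q : ℕ) % 2 ≠ (x : ℕ) % 2)
    (harc : cIoo x y = Icc p q) (hno : ∀ z ∈ Icc p q, ¬E x z) : E p q := by
  by_contra h
  obtain ⟨u, v, huv, hu, hc⟩ := hE.exists_crosses (by omega) h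
  have hpar := hE.parity_eq huv
  wlog hin : u ∈ Icc p q generalizing u v
  · refine this v u (hE.symm huv) (by omega) ?_ hpar.symm ?_ <;>
      simp only [Crosses, mem_Icc] at * <;> omega
  have hout : v ∉ Icc p q := by
    simp only [Crosses, mem_Icc] at *
    omega
  refine hno u hin ?_
  by_cases hvx : v = x
  · exact hE.symm (hvx ▸ huv)
  by_cases hvy : v = y
  · exact hE.trans hxy (hE.symm (hvy ▸ huv))
  · refine hE.rel_of_crosses hxy huv (by omega) ?_
    rw [← harc] at hin hout
    simp only [cIoo, mem_filter, mem_univ, true_and, Crosses] at *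
    split_ifs at hin hout <;> omega

theorem pred_notMem_nonLast (hE : IsMedial E) (hxy : E x y) (hlt : x < y) {q : Fin N}
    (hq : (q : ℕ) + 1 = y) : q ∉ nonLast E := by
  rw [mem_nonLast]
  rintro ⟨w, hqw, hlw⟩
  have := hE.parity_eq hxy
  have := hE.parity_eq hqw
  refine hE.not_crosses hxy hqw (by omega) ?_
  simp only [Crosses]
  omega

theorem visible_of_rel_of_le (hE : IsMedial E) {x y : Fin N} (hle : x ≤ y) (hxy : E x y) :
    Visible (nonLast E) x y := by
  induction hd : (y : ℕ) - x using Nat.strong_induction_on generalizing x y with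
  | _ d ih =>
    have hpar := hE.parity_eq hxy
    rcases hle.eq_or_lt with rfl | hlt
    · intro z hz hz'
      obtain rfl : z = x := by omega
      exact ⟨le_rfl, le_rfl⟩
    by_cases hbetween : ∃ z, x < z ∧ z < y ∧ E x z
    · obtain ⟨z, hxz, hzy, hz⟩ := hbetween
      exact Visible.concat hxz.le hzy.le (ih _ (by omega) hxz.le hz rfl)
        (ih _ (by omega) hzy.le (hE.trans (hE.symm hz) hxy) rfl)
    · push Not at hbetween
      obtain ⟨p, hp⟩ : ∃ p : Fin N, (p : ℕ) = x + 1 := ⟨⟨x + 1, by omega⟩, rfl⟩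
      obtain ⟨q, hq⟩ : ∃ q : Fin N, (q : ℕ) + 1 = y := ⟨⟨y - 1, by omega⟩, by simp only; omega⟩
      have harc : cIoo x y = Icc p q := by
        ext z
        simp only [cIoo, hlt, if_true, mem_filter, mem_univ, true_and, mem_Icc]
        omega
      have hpq : E p q := hE.rel_of_cIoo_eq_Icc hxy (by omega) (by omega) (by omega) harc
        fun z hz => by rw [mem_Icc] at hz; exact hbetween z (by omega) (by omega)
      exact visible_of_visible_succ_pred hp hq (by omega) (mem_nonLast.2 ⟨y, hxy, hlt⟩)
        (hE.pred_notMem_nonLast hxy hlt hq) (ih _ (by omega) (by omega) hpq rfl)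

theorem visible_of_rel (hE : IsMedial E) (hxy : E x y) : Visible (nonLast E) x y := by
  rcases le_total x y with h | h
  · exact hE.visible_of_rel_of_le h hxy
  · exact (hE.visible_of_rel_of_le h (hE.symm hxy)).symm

theorem visible_nonLast (hE : IsMedial E) : Visible (nonLast E) = E := by
  funext x y
  refine propext ⟨fun h => ?_, hE.visible_of_rel⟩
  by_contra hxy
  obtain ⟨u, v, huv, hu, hc⟩ := hE.exists_crosses h.parity_eq hxy
  exact h.not_crosses (hE.visible_of_rel huv) hu hc

theorem exists_rel_notMem_nonLast (hE : IsMedial E) (x : Fin N) : ∃ m, E x m ∧ m ∉ nonLast E := by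
  obtain ⟨m, hm, hmax⟩ := exists_max_image {y | E x y} id ⟨x, by simpa using hE.refl x⟩
  simp only [mem_filter, mem_univ, true_and, id_eq] at hm hmax
  refine ⟨m, hm, fun h => ?_⟩
  obtain ⟨y, hmy, hlt⟩ := mem_nonLast.1 h
  exact hlt.not_ge (hmax y (hE.trans hm hmy))

theorem rel_succ_last [NeZero N] (hN : Even N) (hE : IsMedial E) {m p q : Fin N} (hm : E 0 m)
    (hlast : m ∉ nonLast E) (hp : (p : ℕ) = m + 1) (hq : (q : ℕ) + 1 = N) : E p q := by
  have hm0 : 0 = (m : ℕ) % 2 := hE.parity_eq hm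
  have hN2 := Nat.even_iff.1 hN
  have harc : cIoo m 0 = Icc p q := by
    ext z
    have hz0 : z = 0 ↔ (z : ℕ) = 0 := Fin.ext_iff
    simp only [cIoo, (Fin.zero_le _).not_gt, if_false, or_false, mem_filter, mem_univ, true_and,
      mem_Icc, ne_eq, hz0]
    omega
  refine hE.rel_of_cIoo_eq_Icc (hE.symm hm) (by omega) (by omega) (by omega) harc
    fun z hz hmz => hlast (mem_nonLast.2 ⟨z, hmz, ?_⟩)
  rw [mem_Icc] at hz
  omega

theorem isExcursion_nonLast [NeZero N] (hN : Even N) (hE : IsMedial E) :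
    IsExcursion (nonLast E) := by
  obtain ⟨m, hm, hm_notMem⟩ := hE.exists_rel_notMem_nonLast 0
  have hm0 : 0 = (m : ℕ) % 2 := hE.parity_eq hm
  have hN2 := Nat.even_iff.1 hN
  obtain ⟨p, hp⟩ : ∃ p : Fin N, (p : ℕ) = m + 1 := ⟨⟨m + 1, by omega⟩, rfl⟩
  obtain ⟨q, hq⟩ : ∃ q : Fin N, (q : ℕ) + 1 = N := ⟨⟨N - 1, by omega⟩, by simp only; omega⟩
  have hq_notMem : q ∉ nonLast E := fun h => by
    obtain ⟨y, -, hlt⟩ := mem_nonLast.1 h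
    omega
  have hdown_m := height_succ_of_notMem hm_notMem
  have hdown_q := height_succ_of_notMem hq_notMem
  rw [← hp] at hdown_m
  rw [hq] at hdown_q
  have hvis_m := hE.visible_of_rel hm
  have hvis_q := hE.visible_of_rel (hE.rel_succ_last hN hm hm_notMem hp hq)
  have hheight_m := hvis_m.height_eq
  have hheight_q := hvis_q.height_eq
  have hheight_zero := height_zero (S := nonLast E)
  simp only [Visible, Fin.val_zero] at hvis_m hheight_m
  refine ⟨fun z hz => ?_, by omega⟩
  rcases le_or_gt z m with hzm | hzm
  · have := hvis_m z (by omega) (by omega)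
    omega
  · have := hvis_q z (by omega) (by omega)
    omega

end IsMedial

theorem bijOn_nonLast [NeZero N] (hN : Even N) :
    Set.BijOn nonLast {E : Fin N → Fin N → Prop | IsMedial E} {S | IsExcursion S} :=
  Set.InvOn.bijOn (f' := Visible)
    ⟨fun _ hE => hE.visible_nonLast, fun _ hS => hS.nonLast_visible⟩
    (fun _ hE => hE.isExcursion_nonLast hN) (fun _ hS => hS.isMedial_visible)

end MedialExcursion

section NoncrossingPartition

variable {n : ℕ} {σ τ : NCP n} {i j k l : Fin n} {x y : Fin (2 * n)}

theorem sameBlock_iff_mem_part : sameBlock σ i j ↔ i ∈ σ.part j :=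
  σ.mem_part_iff_exists.symm

theorem sameBlock_iff_part_eq : sameBlock σ i j ↔ σ.part i = σ.part j :=
  sameBlock_iff_mem_part.trans (σ.mem_part_iff_part_eq_part (mem_univ i) (mem_univ j))

theorem sameBlock_iff_mem {B : Finset (Fin n)} (hB : B ∈ σ.parts) (hi : i ∈ B) :
    sameBlock σ i j ↔ j ∈ B := by
  rw [sameBlock_iff_part_eq, σ.part_eq_of_mem hB hi, eq_comm, σ.part_eq_iff_mem hB]

theorem sameBlock.symm (h : sameBlock σ i j) : sameBlock σ j i :=
  sameBlock_iff_part_eq.2 (sameBlock_iff_part_eq.1 h).symm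

theorem sameBlock.trans (hij : sameBlock σ i j) (hjk : sameBlock σ j k) : sameBlock σ i k :=
  sameBlock_iff_part_eq.2 ((sameBlock_iff_part_eq.1 hij).trans (sameBlock_iff_part_eq.1 hjk))

theorem sameBlock_refl (σ : NCP n) (i : Fin n) : sameBlock σ i i :=
  sameBlock_iff_part_eq.2 rfl

theorem eq_of_sameBlock_iff (h : ∀ i j, sameBlock σ i j ↔ sameBlock τ i j) : σ = τ := by
  have hpart (i : Fin n) : σ.part i = τ.part i := by
    ext j
    rw [← sameBlock_iff_mem_part, h, sameBlock_iff_mem_part]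
  have parts_eq (ρ : NCP n) : ρ.parts = univ.image ρ.part := by
    ext B
    rw [mem_image]
    exact ⟨fun hB => ρ.part_surjOn hB, fun ⟨i, hi, h⟩ => h ▸ ρ.part_mem.2 hi⟩
  refine Finpartition.ext ?_
  rw [parts_eq σ, parts_eq τ, funext hpart]

theorem sameBlock_ofSetoid (s : Setoid (Fin n)) :
    sameBlock (Finpartition.ofSetoid s) i j ↔ s i j := by
  rw [sameBlock_iff_mem_part, Finpartition.mem_part_ofSetoid_iff_rel, s.comm']

theorem mem_cIoc : k ∈ cIoc i j ↔ if i < j then i < k ∧ k ≤ j else i < k ∨ k ≤ j := by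
  simp only [cIoc, mem_filter, mem_univ, true_and]

theorem mem_cIoc_swap (hij : i ≠ j) : k ∈ cIoc j i ↔ k ∉ cIoc i j := by
  rw [mem_cIoc, mem_cIoc]
  split_ifs <;> omega

theorem crosses_iff_mem_cIoc : Crosses i j k l ↔ ¬(k ∈ cIoc i j ↔ l ∈ cIoc i j) := by
  rw [mem_cIoc, mem_cIoc, Crosses]
  split_ifs <;> omega

theorem dualRel_iff : dualRel σ i j ↔ ∀ k l, sameBlock σ k l → ¬Crosses i j k l := by
  rcases eq_or_ne i j with rfl | hij
  · exact iff_of_true (Or.inl rfl) fun k l _ => by simp [Crosses]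
  simp only [dualRel, hij, false_or, crosses_iff_mem_cIoc, not_not]
  refine ⟨fun h k l ⟨B, hB, hk, hl⟩ => ⟨fun hki => ?_, fun hli => ?_⟩, ?_⟩
  · by_contra hlj
    exact h ⟨B, hB, ⟨k, mem_inter.2 ⟨hk, hki⟩⟩,
      ⟨l, mem_inter.2 ⟨hl, (mem_cIoc_swap hij).2 hlj⟩⟩⟩
  · by_contra hkj
    exact h ⟨B, hB, ⟨l, mem_inter.2 ⟨hl, hli⟩⟩,
      ⟨k, mem_inter.2 ⟨hk, (mem_cIoc_swap hij).2 hkj⟩⟩⟩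
  · rintro h ⟨B, hB, ⟨k, hk⟩, ⟨l, hl⟩⟩
    rw [mem_inter] at hk hl
    exact (mem_cIoc_swap hij).1 hl.2 ((h k l ⟨B, hB, hk.1, hl.1⟩).1 hk.2)

theorem exists_min_max_block (σ : NCP n) (i : Fin n) :
    ∃ p q, sameBlock σ i p ∧ sameBlock σ i q ∧ ∀ k, sameBlock σ i k → p ≤ k ∧ k ≤ q := by
  have hi : (σ.part i).Nonempty := ⟨i, σ.mem_part (mem_univ i)⟩
  have hmem (k : Fin n) : sameBlock σ i k ↔ k ∈ σ.part i :=
    sameBlock_iff_mem (σ.part_mem.2 (mem_univ i)) (σ.mem_part (mem_univ i))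
  simp only [hmem]
  exact ⟨_, _, min'_mem _ hi, max'_mem _ hi, fun k hk => ⟨min'_le _ k hk, le_max' _ k hk⟩⟩

theorem IsNoncrossing.mem_hull_of_sameBlock (hσ : IsNoncrossing σ) {p q : Fin n}
    (hp : sameBlock σ i p) (hq : sameBlock σ i q)
    (hmem : ∀ k, sameBlock σ i k → p ≤ k ∧ k ≤ q) (hkl : sameBlock σ k l)
    (hk : p ≤ k ∧ k ≤ q) : p ≤ l ∧ l ≤ q := by
  by_contra hl
  have hil : ¬sameBlock σ i l := fun h => hl (hmem l h)
  have hik : ¬sameBlock σ i k := fun h => hil (h.trans hkl)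
  have hkp : k ≠ p := by rintro rfl; exact hik hp
  have hkq : k ≠ q := by rintro rfl; exact hik hq
  rcases lt_or_ge l p with hlp | hpl
  · exact hil (hp.trans (hσ l p k q hlp (by omega) (by omega) hkl.symm (hp.symm.trans hq)).symm)
  · exact hik (hp.trans (hσ p k q l (by omega) (by omega) (by omega) (hp.symm.trans hq) hkl))

theorem exists_crosses_iff_mem_Icc {p q : Fin n} (hpq : p ≤ q) :
    ∃ r, ∀ k l, Crosses r q k l ↔ ¬(p ≤ k ∧ k ≤ q ↔ p ≤ l ∧ l ≤ q) := by
  -- Take for `r` the cyclic predecessor of `p`.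
  rcases Nat.eq_zero_or_pos p with hp | hp
  · refine ⟨⟨n - 1, by omega⟩, fun k l => ?_⟩
    simp only [Crosses, Fin.lt_def]
    omega
  · refine ⟨⟨p - 1, by omega⟩, fun k l => ?_⟩
    simp only [Crosses, Fin.lt_def]
    omega

theorem IsNoncrossing.exists_dualRel_crosses_of_notMem_hull (hσ : IsNoncrossing σ) {p q : Fin n}
    (hp : sameBlock σ i p) (hq : sameBlock σ i q) (hmem : ∀ k, sameBlock σ i k → p ≤ k ∧ k ≤ q)
    (hj : ¬(p ≤ j ∧ j ≤ q)) : ∃ k l, dualRel σ k l ∧ Crosses k l i j := by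
  have hi := hmem i (sameBlock_refl σ i)
  obtain ⟨r, hr⟩ := exists_crosses_iff_mem_Icc (hi.1.trans hi.2)
  refine ⟨r, q, dualRel_iff.2 fun k l hkl => ?_, (hr i j).2 fun h => hj (h.1 hi)⟩
  rw [hr, not_not]
  exact ⟨hσ.mem_hull_of_sameBlock hp hq hmem hkl, hσ.mem_hull_of_sameBlock hp hq hmem hkl.symm⟩

/-- If `i` and `j` each lie in the hull of the other's block, these hulls coincide, and so do the
blocks as they share their least element. -/
theorem IsNoncrossing.exists_dualRel_crosses (hσ : IsNoncrossing σ) (h : ¬sameBlock σ i j) :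
    ∃ k l, dualRel σ k l ∧ Crosses k l i j := by
  obtain ⟨p, q, hp, hq, hmem⟩ := exists_min_max_block σ i
  obtain ⟨p', q', hp', hq', hmem'⟩ := exists_min_max_block σ j
  by_cases hj : p ≤ j ∧ j ≤ q
  · by_cases hi : p' ≤ i ∧ i ≤ q'
    · have hpp' := hσ.mem_hull_of_sameBlock hp hq hmem hp' hj
      have hp'p := hσ.mem_hull_of_sameBlock hp' hq' hmem' hp hi
      obtain rfl : p = p' := le_antisymm hpp'.1 hp'p.1
      exact absurd (hp.trans hp'.symm) h
    · obtain ⟨k, l, hkl, hc⟩ := hσ.exists_dualRel_crosses_of_notMem_hull hp' hq' hmem' hi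
      exact ⟨k, l, hkl, by simp only [Crosses] at *; omega⟩
  · exact hσ.exists_dualRel_crosses_of_notMem_hull hp hq hmem hj

theorem crosses_til_bar : Crosses (til i) (til j) (bar k) (bar l) ↔ Crosses i j k l := by
  simp only [Crosses, bar, til, Fin.lt_def]
  omega

theorem exists_eq_bar (hx : (x : ℕ) % 2 = 0) : ∃ i, x = bar i :=
  ⟨⟨x / 2, by omega⟩, Fin.ext (by simp only [bar]; omega)⟩

theorem exists_eq_til (hx : (x : ℕ) % 2 = 1) : ∃ i, x = til i :=
  ⟨⟨x / 2, by omega⟩, Fin.ext (by simp only [til]; omega)⟩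

theorem eq_bar_or_eq_til (x : Fin (2 * n)) : (∃ i, x = bar i) ∨ ∃ i, x = til i :=
  (Nat.mod_two_eq_zero_or_one x).imp exists_eq_bar exists_eq_til

theorem bar_mod_two (i : Fin n) : (bar i : ℕ) % 2 = 0 :=
  Nat.mul_mod_right 2 i

theorem til_mod_two (i : Fin n) : (til i : ℕ) % 2 = 1 :=
  Nat.mul_add_mod 2 i 1

theorem bar_ne_til : bar i ≠ til j := fun h => by
  have := til_mod_two j
  rw [← h, bar_mod_two] at this
  exact zero_ne_one this

theorem bar_injective : Function.Injective (bar (n := n)) := fun i j h => by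
  simp only [Fin.ext_iff, bar] at h ⊢
  omega

theorem til_injective : Function.Injective (til (n := n)) := fun i j h => by
  simp only [Fin.ext_iff, til] at h ⊢
  omega

/-- The equivalence relation on `[2n]` whose classes are the blocks of `σ`, on the points `bar i`,
and the blocks of its dual, on the points `til i`. -/
inductive MedialRel (σ : NCP n) : Fin (2 * n) → Fin (2 * n) → Prop
  | bar {i j : Fin n} : sameBlock σ i j → MedialRel σ (bar i) (bar j)
  | til {i j : Fin n} : dualRel σ i j → MedialRel σ (til i) (til j)

theorem medialRel_bar_left : MedialRel σ (bar i) x ↔ ∃ j, x = bar j ∧ sameBlock σ i j := by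
  refine ⟨fun h => ?_, by rintro ⟨j, rfl, h⟩; exact .bar h⟩
  generalize hy : bar i = y at h
  cases h with
  | bar h => exact ⟨_, rfl, bar_injective hy ▸ h⟩
  | til h => exact absurd hy bar_ne_til

theorem medialRel_til_left : MedialRel σ (til i) x ↔ ∃ j, x = til j ∧ dualRel σ i j := by
  refine ⟨fun h => ?_, by rintro ⟨j, rfl, h⟩; exact .til h⟩
  generalize hy : til i = y at h
  cases h with
  | bar h => exact absurd hy.symm bar_ne_til
  | til h => exact ⟨_, rfl, til_injective hy ▸ h⟩

theorem medialRel_bar_bar : MedialRel σ (bar i) (bar j) ↔ sameBlock σ i j := by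
  simp [medialRel_bar_left, bar_injective.eq_iff]

theorem IsNoncrossing.isMedial_medialRel (hσ : IsNoncrossing σ) : IsMedial (MedialRel σ) := by
  have crosses_symm {i j k l : Fin n} :
      Crosses (bar k) (bar l) (til i) (til j) ↔ Crosses (til i) (til j) (bar k) (bar l) :=
    ⟨.symm bar_ne_til bar_ne_til bar_ne_til bar_ne_til,
      .symm bar_ne_til.symm bar_ne_til.symm bar_ne_til.symm bar_ne_til.symm⟩
  refine fun x y => ⟨fun h => ?_, fun ⟨hp, hc⟩ => ?_⟩
  · cases h with
    | bar h =>
      refine ⟨by rw [bar_mod_two, bar_mod_two], fun u v huv hu => ?_⟩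
      cases huv with
      | bar => exact absurd (by rw [bar_mod_two, bar_mod_two]) hu
      | til h' => exact fun hc => dualRel_iff.1 h' _ _ h (crosses_til_bar.1 (crosses_symm.1 hc))
    | til h =>
      refine ⟨by rw [til_mod_two, til_mod_two], fun u v huv hu => ?_⟩
      cases huv with
      | bar h' => exact fun hc => dualRel_iff.1 h _ _ h' (crosses_til_bar.1 hc)
      | til => exact absurd (by rw [til_mod_two, til_mod_two]) hu
  · rcases eq_bar_or_eq_til x with ⟨i, rfl⟩ | ⟨i, rfl⟩ <;>
      rcases eq_bar_or_eq_til y with ⟨j, rfl⟩ | ⟨j, rfl⟩ <;>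
      simp only [bar_mod_two, til_mod_two, zero_ne_one, one_ne_zero] at hp hc
    · refine .bar (by_contra fun h => ?_)
      obtain ⟨k, l, hkl, hcr⟩ := hσ.exists_dualRel_crosses h
      exact hc _ _ (.til hkl) (by simp [til_mod_two]) (crosses_symm.2 (crosses_til_bar.2 hcr))
    · exact .til (dualRel_iff.2 fun k l hkl hcr =>
        hc _ _ (.bar hkl) (by simp [bar_mod_two]) (crosses_til_bar.2 hcr))

theorem bijOn_medialRel :
    Set.BijOn MedialRel {σ : NCP n | IsNoncrossing σ} {E | IsMedial E} := by
  refine ⟨fun σ hσ => hσ.isMedial_medialRel, fun σ _ τ _ h => ?_, fun E hE => ?_⟩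
  · exact eq_of_sameBlock_iff fun i j => by rw [← medialRel_bar_bar, h, medialRel_bar_bar]
  · let s : Setoid (Fin n) :=
      { r := fun i j => E (bar i) (bar j)
        iseqv := ⟨fun _ => hE.refl _, hE.symm, hE.trans⟩ }
    have hs (i j : Fin n) : sameBlock (Finpartition.ofSetoid s) i j ↔ E (bar i) (bar j) :=
      sameBlock_ofSetoid s
    have hnc : IsNoncrossing (Finpartition.ofSetoid s) := by
      intro a b c d hab hbc hcd hac hbd
      rw [hs] at hac hbd ⊢
      refine hE.rel_of_crosses hac hbd (by simp [bar]) ?_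
      simp only [Crosses, bar, Fin.lt_def] at *
      omega
    refine ⟨_, hnc, hnc.isMedial_medialRel.ext_of_even hE fun x y hx => ?_⟩
    obtain ⟨i, rfl⟩ : ∃ i, x = bar i := exists_eq_bar hx
    refine medialRel_bar_left.trans ⟨fun ⟨j, hj, h⟩ => hj ▸ (hs i j).1 h, fun h => ?_⟩
    obtain ⟨j, rfl⟩ : ∃ j, y = bar j := exists_eq_bar ((hE.parity_eq h).symm.trans hx)
    exact ⟨j, rfl, (hs i j).2 h⟩

theorem mem_maxAt {N : ℕ} {a x : Fin N} {S : Finset (Fin N)} :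
    x ∈ maxAt a S ↔ x ∈ S ∧ ∀ y ∈ S, y - a ≤ x - a := by
  rw [maxAt, mem_filter]

theorem mem_biUnion_maxAt {N : ℕ} {a x : Fin N} {ι : Type*} {s : Finset ι}
    {B : ι → Finset (Fin N)} {E : Fin N → Fin N → Prop}
    (hB : ∀ b ∈ s, ∀ x ∈ B b, ∀ y, y ∈ B b ↔ E x y) (hx : ∃ b ∈ s, x ∈ B b) :
    x ∈ s.biUnion (fun b => maxAt a (B b)) ↔ ∀ y, E x y → y - a ≤ x - a := by
  simp only [mem_biUnion, mem_maxAt]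
  constructor
  · rintro ⟨b, hb, hxb, hmax⟩ y hy
    exact hmax y ((hB b hb x hxb y).2 hy)
  · obtain ⟨b, hb, hxb⟩ := hx
    exact fun h => ⟨b, hb, hxb, fun y hy => h y ((hB b hb x hxb y).1 hy)⟩

theorem bar_mem_biUnion_maxAt {a : Fin (2 * n)} :
    bar i ∈ σ.parts.biUnion (fun B => maxAt a (B.image bar)) ↔
      ∀ y, MedialRel σ (bar i) y → y - a ≤ bar i - a := by
  refine mem_biUnion_maxAt (fun B hB x hx y => ?_)
    ⟨σ.part i, σ.part_mem.2 (mem_univ i), mem_image_of_mem bar (σ.mem_part (mem_univ i))⟩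
  obtain ⟨k, hk, rfl⟩ := mem_image.1 hx
  simp only [mem_image, medialRel_bar_left, sameBlock_iff_mem hB hk]
  exact exists_congr fun j => and_comm.trans (and_congr_left' eq_comm)

theorem til_mem_biUnion_maxAt (hσ : IsNoncrossing σ) {a : Fin (2 * n)} :
    til i ∈ univ.biUnion (fun k => maxAt a ((univ.filter (dualRel σ k)).image til)) ↔
      ∀ y, MedialRel σ (til i) y → y - a ≤ til i - a := by
  have hE := hσ.isMedial_medialRel
  have hmem (k : Fin n) (y : Fin (2 * n)) :
      y ∈ (univ.filter (dualRel σ k)).image til ↔ MedialRel σ (til k) y := by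
    simp only [mem_image, mem_filter, mem_univ, true_and, medialRel_til_left]
    exact exists_congr fun j => and_comm.trans (and_congr_left' eq_comm)
  refine mem_biUnion_maxAt (fun k _ x hx y => ?_) ⟨i, mem_univ i, (hmem _ _).2 (hE.refl _)⟩
  rw [hmem] at hx ⊢
  exact ⟨hE.trans (hE.symm hx), hE.trans hx⟩

theorem mem_IaP (hσ : IsNoncrossing σ) {a : Fin (2 * n)} :
    x ∈ IaP σ a ↔ ∃ y, MedialRel σ x y ∧ x - a < y - a := by
  rw [← not_iff_not, IaP, mem_sdiff, and_iff_right (mem_univ x), mem_union, not_not]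
  push Not
  rcases eq_bar_or_eq_til x with ⟨i, rfl⟩ | ⟨i, rfl⟩
  · rw [or_iff_left (by simp [mem_maxAt, bar_ne_til.symm]), bar_mem_biUnion_maxAt]
  · rw [or_iff_right (by simp [mem_maxAt, bar_ne_til]), til_mem_biUnion_maxAt hσ]

theorem image_sub_IaP [NeZero n] (hσ : IsNoncrossing σ) (a : Fin (2 * n)) :
    (IaP σ a).image (· - a) = nonLast (rotateRel a (MedialRel σ)) := by
  ext x
  have hx : x ∈ (IaP σ a).image (· - a) ↔ x + a ∈ IaP σ a := by
    simp [mem_image, sub_eq_iff_eq_add]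
  rw [hx, mem_IaP hσ, mem_nonLast, ← (Equiv.addRight a).exists_congr_right]
  simp only [rotateRel, Equiv.coe_addRight, add_sub_cancel_right]

theorem bijOn_image_sub_IaP [NeZero n] (a : Fin (2 * n)) :
    Set.BijOn (fun σ : NCP n => (IaP σ a).image (· - a)) {σ | IsNoncrossing σ}
      {I | IsCatalan I} := by
  have hN : Even (2 * n) := even_two_mul n
  simp only [isCatalan_iff_isExcursion]
  exact (((bijOn_nonLast hN).comp (bijOn_rotateRel hN a)).comp bijOn_medialRel).congr
    fun σ hσ => (image_sub_IaP hσ a).symm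

end NoncrossingPartition

theorem stmt13 (n : ℕ) (a : Fin (2*n)) :
    Set.BijOn (fun σ : NCP n => IaP σ a) {σ | IsNoncrossing σ} {I | IsCatalanAt a I} ∧
    ∀ σ : NCP n, IsNoncrossing σ → (IaP σ a).card = n - 1 ∧ IsCatalanAt a (IaP σ a) := by
  have : NeZero n := ⟨by rintro rfl; exact a.elim0⟩
  have hinj : Function.Injective fun x : Fin (2 * n) => x - a := sub_left_injective
  have hbij := bijOn_image_sub_IaP a
  refine ⟨⟨fun σ hσ => hbij.mapsTo hσ, fun σ hσ τ hτ h => hbij.injOn hσ hτ (congrArg _ h), ?_⟩,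
    fun σ hσ => ?_⟩
  · intro I hI
    obtain ⟨σ, hσ, h⟩ := hbij.surjOn hI
    exact ⟨σ, hσ, image_injective hinj h⟩
  · have hcat : IsCatalanAt a (IaP σ a) := hbij.mapsTo hσ
    exact ⟨(card_image_of_injective _ hinj).symm.trans hcat.1, hcat⟩

end
end
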